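/- arXiv:2411.13442 — 5 statements merged into one kernel-verified Lean document; each statement's English description precedes it below -/
import Mathlib

section
/- Fix y > 0 and let g : ℝ → ℝ satisfy g(p) ∈ (0,1) and ∫_0^{g(p)} (1-t^p)^{-2/p} dt = y for every p > 1. Then the function p ↦ log g(p) is concave on the interval (1,∞). In other words, p ↦ tamh_{p',p}(y), where p' = p/(p-1) is the conjugate exponent, is logarithmically concave on (1,∞). -/
open MeasureTheory

lemma tamh_tangent (q v : ℝ) (hq : 0 < q) (hv : v < 0) : ∃ A B : ℝ, ∀ p w : ℝ, 0 < p → w < 0 →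
    -Real.log (1 - Real.exp (q * v)) / q + A * (w - v) + B * (p - q) ≤
      -Real.log (1 - Real.exp (p * w)) / p := by
  obtain ⟨c, hc⟩ : ∃ c, c = q * v := ⟨_, rfl⟩
  have hc0 : c < 0 := by rw [hc]; exact mul_neg_of_pos_of_neg hq hv
  have hec : 0 < 1 - Real.exp c := by
    have := Real.exp_lt_one_iff.2 hc0
    linarith
  obtain ⟨H, hH⟩ : ∃ H, H = -Real.log (1 - Real.exp c) := ⟨_, rfl⟩
  obtain ⟨D, hD⟩ : ∃ D, D = Real.exp c / (1 - Real.exp c) := ⟨_, rfl⟩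
  have hD0 : 0 < D := by rw [hD]; have := Real.exp_pos c; positivity
  have hH0 : 0 ≤ H := by
    rw [hH]
    have := Real.log_nonpos hec.le (by have := Real.exp_pos c; linarith)
    linarith
  refine ⟨D, (c * D - H) / q ^ 2, fun p w hp hw => ?_⟩
  obtain ⟨z, hz⟩ : ∃ z, z = p * w := ⟨_, rfl⟩
  have hz0 : z < 0 := by rw [hz]; exact mul_neg_of_pos_of_neg hp hw
  have hez : 0 < 1 - Real.exp z := by
    have := Real.exp_lt_one_iff.2 hz0
    linarith
  rw [← hc, ← hz, ← hH]
  have key : H + D * (z - c) ≤ -Real.log (1 - Real.exp z) := by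
    have h1 := Real.log_le_sub_one_of_pos (div_pos hez hec)
    rw [Real.log_div hez.ne' hec.ne'] at h1
    have h2 : Real.exp c * (z - c) ≤ Real.exp z - Real.exp c := by
      have h3 := Real.add_one_le_exp (z - c)
      have h4 : Real.exp z = Real.exp c * Real.exp (z - c) := by
        rw [← Real.exp_add]; congr 1; ring
      rw [h4]
      nlinarith [Real.exp_pos c]
    have h5 : D * (z - c) ≤ (Real.exp z - Real.exp c) / (1 - Real.exp c) := by
      rw [hD, div_mul_eq_mul_div]
      exact div_le_div_of_nonneg_right h2 hec.le
    have h6 : (Real.exp z - Real.exp c) / (1 - Real.exp c)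
        = 1 - (1 - Real.exp z) / (1 - Real.exp c) := by
      field_simp; ring
    rw [hH]; linarith
  rw [le_div_iff₀ hp]
  refine le_trans ?_ key
  have hs : 0 ≤ (H - c * D) * (1 - p / q) ^ 2 := by
    apply mul_nonneg _ (sq_nonneg _)
    nlinarith
  have e : H + D * (z - c) - (H / q + D * (w - v) + (c * D - H) / q ^ 2 * (p - q)) * p
      = (H - c * D) * (1 - p / q) ^ 2 := by
    rw [hz, hc]; field_simp; ring
  linarith

lemma tamh_point (a b p₁ p₂ u₁ u₂ r : ℝ) (ha : 0 ≤ a) (hb : 0 ≤ b) (hab : a + b = 1)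
    (hp₁ : 0 < p₁) (hp₂ : 0 < p₂) (hu₁ : u₁ < 0) (hu₂ : u₂ < 0) (hr : r < 0) :
    Real.exp ((a * u₁ + b * u₂) + 2 * (-Real.log (1 - Real.exp ((a * p₁ + b * p₂) * ((a * u₁ + b * u₂) + r))) / (a * p₁ + b * p₂)))
    ≤ a * Real.exp (u₁ + 2 * (-Real.log (1 - Real.exp (p₁ * (u₁ + r))) / p₁))
      + b * Real.exp (u₂ + 2 * (-Real.log (1 - Real.exp (p₂ * (u₂ + r))) / p₂)) := by
  have hp : 0 < a * p₁ + b * p₂ := convex_Ioi (0:ℝ) hp₁ hp₂ ha hb hab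
  have hu : a * u₁ + b * u₂ < 0 := convex_Iio (0:ℝ) hu₁ hu₂ ha hb hab
  obtain ⟨A, B, h⟩ := tamh_tangent (a * p₁ + b * p₂) ((a * u₁ + b * u₂) + r) hp (by linarith)
  have h1 := mul_le_mul_of_nonneg_left (h p₁ (u₁ + r) hp₁ (by linarith)) ha
  have h2 := mul_le_mul_of_nonneg_left (h p₂ (u₂ + r) hp₂ (by linarith)) hb
  have hc := convexOn_exp.2 (Set.mem_univ (u₁ + 2 * (-Real.log (1 - Real.exp (p₁ * (u₁ + r))) / p₁)))
    (Set.mem_univ (u₂ + 2 * (-Real.log (1 - Real.exp (p₂ * (u₂ + r))) / p₂))) ha hb hab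
  simp only [smul_eq_mul] at hc
  refine le_trans (Real.exp_le_exp.2 ?_) hc
  generalize -Real.log (1 - Real.exp (p₁ * (u₁ + r))) / p₁ = F1 at *
  generalize -Real.log (1 - Real.exp (p₂ * (u₂ + r))) / p₂ = F2 at *
  generalize -Real.log (1 - Real.exp ((a * p₁ + b * p₂) * ((a * u₁ + b * u₂) + r))) / (a * p₁ + b * p₂) = F at *
  obtain rfl : b = 1 - a := by linarith
  nlinarith

lemma tamh_eq (p x s : ℝ) (hp : 0 < p) (hx : 0 < x) (hx1 : x < 1) (hs : 0 < s) (hs1 : s < 1) :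
    x * (1 - (x * s) ^ p) ^ (-(2 / p)) = Real.exp (Real.log x +
      2 * (-Real.log (1 - Real.exp (p * (Real.log x + Real.log s))) / p)) := by
  have hxs : 0 < x * s := by positivity
  have hlt : (x * s) ^ p < 1 := Real.rpow_lt_one hxs.le (by nlinarith) hp
  rw [Real.exp_add, Real.exp_log hx, ← Real.log_mul hx.ne' hs.ne', mul_comm p,
    ← Real.rpow_def_of_pos hxs, Real.rpow_def_of_pos (by linarith : 0 < 1 - (x * s) ^ p)]
  congr 2
  ring

lemma tamh_cont (p : ℝ) (hp : 0 < p) :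
    ContinuousOn (fun t : ℝ => (1 - t ^ p) ^ (-(2 / p))) (Set.Ico 0 1) := by
  apply ContinuousOn.rpow_const
  · exact (continuous_const.sub (Real.continuous_rpow_const hp.le)).continuousOn
  · intro t ht
    left
    have := Real.rpow_lt_one ht.1 ht.2 hp
    linarith

lemma tamh_int (p c d : ℝ) (hp : 0 < p) (hc : 0 ≤ c) (hcd : c ≤ d) (hd : d < 1) :
    IntervalIntegrable (fun t : ℝ => (1 - t ^ p) ^ (-(2 / p))) volume c d := by
  apply ContinuousOn.intervalIntegrable
  rw [Set.uIcc_of_le hcd]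
  exact (tamh_cont p hp).mono fun t ht => ⟨hc.trans ht.1, ht.2.trans_lt hd⟩

lemma tamh_scale (p x : ℝ) :
    (∫ t in (0:ℝ)..x, (1 - t ^ p) ^ (-(2 / p))) =
      ∫ s in (0:ℝ)..1, x * (1 - (x * s) ^ p) ^ (-(2 / p)) := by
  rw [intervalIntegral.integral_const_mul,
    intervalIntegral.mul_integral_comp_mul_left (f := fun t => (1 - t ^ p) ^ (-(2 / p)))]
  simp

lemma tamh_int' (p x : ℝ) (hp : 0 < p) (hx : 0 < x) (hx1 : x < 1) :
    IntervalIntegrable (fun s : ℝ => x * (1 - (x * s) ^ p) ^ (-(2 / p))) volume 0 1 := by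
  apply ContinuousOn.intervalIntegrable
  rw [Set.uIcc_of_le zero_le_one]
  refine continuousOn_const.mul ((tamh_cont p hp).comp (f := fun s => x * s) (by fun_prop) ?_)
  intro s hs
  exact ⟨mul_nonneg hx.le hs.1, by nlinarith [hs.1, hs.2]⟩

theorem tamh_conjugate_log_concave (y : ℝ) (hy : 0 < y) (g : ℝ → ℝ)
    (hg : ∀ p : ℝ, 1 < p → g p ∈ Set.Ioo (0:ℝ) 1 ∧
      (∫ t in (0:ℝ)..g p, (1 - t ^ p) ^ (-(2 / p))) = y) :
    ConcaveOn ℝ (Set.Ioi (1:ℝ)) (fun p => Real.log (g p)) := by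
  refine ⟨convex_Ioi 1, fun p₁ hp₁ p₂ hp₂ a b ha hb hab => ?_⟩
  have hp := convex_Ioi (1:ℝ) hp₁ hp₂ ha hb hab
  simp only [smul_eq_mul, Set.mem_Ioi] at *
  obtain ⟨⟨h1p, h1l⟩, h1⟩ := hg p₁ hp₁
  obtain ⟨⟨h2p, h2l⟩, h2⟩ := hg p₂ hp₂
  obtain ⟨⟨h3p, h3l⟩, h3⟩ := hg _ hp
  have hl1 := Real.log_neg h1p h1l
  have hl2 := Real.log_neg h2p h2l
  have hu : a * Real.log (g p₁) + b * Real.log (g p₂) < 0 :=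
    convex_Iio (0:ℝ) hl1 hl2 ha hb hab
  obtain ⟨x, hx⟩ : ∃ x, x = Real.exp (a * Real.log (g p₁) + b * Real.log (g p₂)) := ⟨_, rfl⟩
  have hlx : Real.log x = a * Real.log (g p₁) + b * Real.log (g p₂) := by rw [hx, Real.log_exp]
  have hx0 : 0 < x := hx ▸ Real.exp_pos _
  have hx1 : x < 1 := hx ▸ Real.exp_lt_one_iff.2 hu
  rw [← hlx]
  apply Real.log_le_log hx0
  by_contra hcon
  push Not at hcon
  have hp0 : 0 < a * p₁ + b * p₂ := by linarith
  have hle : (∫ t in (0:ℝ)..x, (1 - t ^ (a * p₁ + b * p₂)) ^ (-(2 / (a * p₁ + b * p₂)))) ≤ y := by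
    have hy' : y = a * y + b * y := by rw [← add_mul, hab, one_mul]
    rw [hy']
    nth_rewrite 1 [← h1]
    rw [← h2, tamh_scale, tamh_scale, tamh_scale, ← intervalIntegral.integral_const_mul a,
      ← intervalIntegral.integral_const_mul b]
    have i1 := (tamh_int' p₁ (g p₁) (by linarith) h1p h1l).const_mul a
    have i2 := (tamh_int' p₂ (g p₂) (by linarith) h2p h2l).const_mul b
    rw [← intervalIntegral.integral_add i1 i2]
    apply intervalIntegral.integral_mono_on_of_le_Ioo zero_le_one
      (tamh_int' _ x hp0 hx0 hx1) (i1.add i2)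
    intro s hs
    rw [tamh_eq _ _ _ hp0 hx0 hx1 hs.1 hs.2, tamh_eq p₁ _ _ (by linarith) h1p h1l hs.1 hs.2,
      tamh_eq p₂ _ _ (by linarith) h2p h2l hs.1 hs.2, hlx]
    exact tamh_point a b p₁ p₂ _ _ _ ha hb hab (by linarith) (by linarith) hl1 hl2
      (Real.log_neg hs.1 hs.2)
  have hpos : 0 < ∫ t in (g (a * p₁ + b * p₂))..x,
      (1 - t ^ (a * p₁ + b * p₂)) ^ (-(2 / (a * p₁ + b * p₂))) := by
    apply intervalIntegral.intervalIntegral_pos_of_pos_on (tamh_int _ _ _ hp0 h3p.le hcon.le hx1) _ hcon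
    intro t ht
    have := Real.rpow_lt_one (h3p.trans ht.1).le (ht.2.trans hx1) hp0
    exact Real.rpow_pos_of_pos (by linarith) _
  have hadd := intervalIntegral.integral_add_adjacent_intervals
    (tamh_int (a * p₁ + b * p₂) 0 _ hp0 le_rfl h3p.le h3l)
    (tamh_int (a * p₁ + b * p₂) _ x hp0 h3p.le hcon.le hx1)
  linarith
end

section
/- Fix q > 1 and y > 0, and let g : ℝ → ℝ satisfy g(p) ∈ (0,1) and ∫_0^{g(p)} (1-t^q)^{-1/p} dt = y for every p > 1. Then g is concave on the interval (1,∞). In other words, for each fixed y and q > 1 the function p ↦ sin_{p,q}(y) is concave on (1,∞). -/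
open MeasureTheory

lemma hasDerivAt_J_s (k L : ℝ → ℝ) (hk : Continuous k) (hL : Continuous L) (x s : ℝ) :
    HasDerivAt (fun s => ∫ t in (0:ℝ)..x, k t * Real.exp (s * L t))
      (∫ t in (0:ℝ)..x, k t * L t * Real.exp (s * L t)) s := by
  obtain ⟨C, hC⟩ := ((isCompact_uIcc (a := (0:ℝ)) (b := x)).prod
    (isCompact_Icc (a := s - 1) (b := s + 1))).exists_bound_of_continuousOn
    (f := fun z : ℝ × ℝ => k z.1 * L z.1 * Real.exp (z.2 * L z.1)) (by fun_prop)
  refine (intervalIntegral.hasDerivAt_integral_of_dominated_loc_of_deriv_le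
    (F := fun s t => k t * Real.exp (s * L t))
    (F' := fun s t => k t * L t * Real.exp (s * L t)) (bound := fun _ => C)
    (s := Set.Icc (s-1) (s+1)) (Icc_mem_nhds (by linarith) (by linarith)) ?_ ?_ ?_ ?_ ?_ ?_).2
  · exact Filter.Eventually.of_forall fun s => (by fun_prop : Continuous _).aestronglyMeasurable
  · exact (by fun_prop : Continuous _).intervalIntegrable _ _
  · exact (by fun_prop : Continuous _).aestronglyMeasurable
  · refine Filter.Eventually.of_forall fun t ht s hs => hC (t, s) ⟨Set.uIoc_subset_uIcc ht, hs⟩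
  · simp
  · refine Filter.Eventually.of_forall fun t ht s hs => ?_
    have := (((hasDerivAt_id s).mul_const (L t)).exp).const_mul (k t)
    refine this.congr_deriv ?_
    simp only [id]; ring

lemma hasDerivAt_J (k L : ℝ → ℝ) (hk : Continuous k) (hL : Continuous L) (X S : ℝ → ℝ)
    (X' S' p : ℝ) (hX : HasDerivAt X X' p) (hS : HasDerivAt S S' p) :
    HasDerivAt (fun p => ∫ t in (0:ℝ)..X p, k t * Real.exp (S p * L t))
      (X' * (k (X p) * Real.exp (S p * L (X p))) +
        S' * ∫ t in (0:ℝ)..X p, k t * L t * Real.exp (S p * L t)) p := by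
  have key := hasStrictFDerivAt_uncurry_coprod (𝕜 := ℝ) (u := (X p, S p))
    (f := fun x s => ∫ t in (0:ℝ)..x, k t * Real.exp (s * L t))
    (f₁ := fun x s => ContinuousLinearMap.toSpanSingleton ℝ (k x * Real.exp (s * L x)))
    (f₂ := fun x s => ContinuousLinearMap.toSpanSingleton ℝ
      (∫ t in (0:ℝ)..x, k t * L t * Real.exp (s * L t)))
    (Filter.Eventually.of_forall fun v => by
      have : Continuous (fun t => k t * Real.exp (v.2 * L t)) := by fun_prop
      exact (this.integral_hasStrictDerivAt 0 v.1).hasDerivAt.hasFDerivAt)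
    (Filter.Eventually.of_forall fun v => (hasDerivAt_J_s k L hk hL v.1 v.2).hasFDerivAt)
    (by
      have : Continuous fun z : ℝ × ℝ => k z.1 * Real.exp (z.2 * L z.1) := by fun_prop
      exact ((ContinuousLinearMap.toSpanSingletonCLE (𝕜 := ℝ) (E := ℝ)).continuous.comp this).continuousAt)
    (by
      have : Continuous fun z : ℝ × ℝ => ∫ t in (0:ℝ)..z.1, k t * L t * Real.exp (z.2 * L t) :=
        intervalIntegral.continuous_parametric_intervalIntegral_of_continuous
          (f := fun (z : ℝ × ℝ) t => k t * L t * Real.exp (z.2 * L t))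
          (by unfold Function.uncurry; fun_prop) continuous_fst
      exact ((ContinuousLinearMap.toSpanSingletonCLE (𝕜 := ℝ) (E := ℝ)).continuous.comp this).continuousAt)
  have h2 := key.hasFDerivAt.comp_hasDerivAt p (hX.prodMk hS)
  refine h2.congr_deriv ?_
  simp [Function.HasUncurry.uncurry]

lemma alg_core (L th R p : ℝ) (hL : 0 < L) (hLp : L ≤ 2 * p) (hp : 1 ≤ p) (hR : 1 ≤ R)
    (hth : 0 < th) (h : R * L ≤ 1 → th ≤ 1) :
    L * (1 - th)^2 - 2 * p * (1 - th) - p * R * L * th^2 < 0 := by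
  have hpos : 0 < p * R * L * th^2 := by positivity
  rcases le_or_gt th 1 with h1 | h1
  · have : (1 - th) * (L * (1 - th) - 2 * p) ≤ 0 := by
      apply mul_nonpos_of_nonneg_of_nonpos (by linarith)
      nlinarith
    nlinarith
  · have hRL : 1 < R * L := by
      by_contra hh
      exact absurd (h (not_lt.1 hh)) (not_le.2 h1)
    have e1 : L ≤ p * R * L := by
      have : 1 ≤ p * R := by nlinarith
      nlinarith
    have e2 : p ≤ p * R * L := by nlinarith
    obtain ⟨d, rfl⟩ : ∃ d, th = 1 + d := ⟨th - 1, by ring⟩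
    have hd : 0 < d := by linarith
    have e3 : L * d^2 ≤ p * R * L * d^2 := by gcongr
    have e4 : p * (1 + 2 * d) ≤ p * R * L * (1 + 2 * d) := by gcongr
    nlinarith

lemma G_alg (L E a P R p : ℝ) (hL : 0 < L) (hLp : L ≤ 2 * p) (hp : 1 ≤ p) (hR : 1 ≤ R)
    (hE : 0 < E) (ha : 0 < a) (hP : 0 < P) (h : R * L ≤ 1 → P * a ≤ p * L * E) :
    2 * P * a + 2 * L * (L * E) - L * L * E - 2 * p * (L * E) -
     ((R * P^2 * a^2 + P * (2 * a * (L * E))) * (p * E) - P * a^2 * (P * E)) / (p * E)^2 < 0 := by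
  have hp0 : 0 < p := by linarith
  have := alg_core L (P * a / (p * L * E)) R p hL hLp hp hR (by positivity) (by
    intro hh; rw [div_le_one (by positivity)]; exact h hh)
  have h2 := mul_neg_of_pos_of_neg (mul_pos hE hL) this
  refine lt_of_eq_of_lt ?_ h2
  field_simp
  ring

lemma Lv_mono (v w : ℝ) (hv : 0 < v) (hvw : v ≤ w) (hw : w < 1) :
    - Real.log (1 - v) / v ≤ - Real.log (1 - w) / w := by
  have hw0 : 0 < w := by linarith
  have h := strictConcaveOn_log_Ioi.concaveOn.2 (show (1:ℝ) ∈ Set.Ioi 0 by simp)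
    (show 1 - w ∈ Set.Ioi 0 by simp; linarith) (show 0 ≤ 1 - v / w from by rw [sub_nonneg, div_le_one hw0]; exact hvw) (show 0 ≤ v / w by positivity)
    (by ring)
  simp only [smul_eq_mul, Real.log_one, mul_zero, zero_add] at h
  have e : (1 - v / w) * 1 + v / w * (1 - w) = 1 - v := by field_simp; ring
  rw [e] at h
  rw [div_le_div_iff₀ hv hw0]
  have : v / w * Real.log (1 - w) * w ≤ Real.log (1 - v) * w := by gcongr
  have e2 : v / w * Real.log (1 - w) * w = v * Real.log (1 - w) := by field_simp
  linarith

lemma pow_facts (q x : ℝ) (hq : 1 < q) (hx : 0 < x) (hx1 : x < 1) :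
    0 < x ^ q ∧ x ^ q < 1 :=
  ⟨Real.rpow_pos_of_pos hx q, Real.rpow_lt_one hx.le hx1 (by linarith)⟩

lemma hasDerivAt_Lam (q c : ℝ) (hq : 1 < q) (hc : c < 1) (Λ : ℝ → ℝ)
    (hΛ : ∀ x ∈ Set.Icc 0 c, Λ x = - Real.log (1 - x ^ q)) (x : ℝ) (hx : x ∈ Set.Ioo 0 c) :
    HasDerivAt Λ (q * x ^ (q - 1) / (1 - x ^ q)) x := by
  obtain ⟨h0, h1⟩ := pow_facts q x hq hx.1 (hx.2.trans hc)
  have h : HasDerivAt (fun x : ℝ => - Real.log (1 - x ^ q)) (q * x ^ (q - 1) / (1 - x ^ q)) x := by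
    have := (((Real.hasDerivAt_rpow_const (x := x) (p := q) (Or.inl hx.1.ne')).const_sub 1).log
      (by linarith)).neg
    refine this.congr_deriv ?_
    ring
  refine h.congr_of_eventuallyEq ?_
  filter_upwards [Ioo_mem_nhds hx.1 hx.2] with z hz using hΛ z ⟨hz.1.le, hz.2.le⟩

lemma hasDerivAt_P (q x : ℝ) (hq : 1 < q) (hx : 0 < x) (hx1 : x < 1) :
    HasDerivAt (fun x : ℝ => q * x ^ (q - 1) / (1 - x ^ q))
      ((q - 1 + x ^ q) / (q * x ^ q) * (q * x ^ (q - 1) / (1 - x ^ q)) ^ 2) x := by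
  obtain ⟨h0, h1⟩ := pow_facts q x hq hx hx1
  have hne : 1 - x ^ q ≠ 0 := by linarith
  have := ((Real.hasDerivAt_rpow_const (x := x) (p := q - 1) (Or.inl hx.ne')).const_mul q).div
    ((Real.hasDerivAt_rpow_const (x := x) (p := q) (Or.inl hx.ne')).const_sub 1) hne
  refine this.congr_deriv ?_
  rw [Real.rpow_sub_one hx.ne' (q - 1), Real.rpow_sub_one hx.ne' q]
  generalize x ^ q = v at *
  field_simp
  ring

lemma int_pos (k : ℝ → ℝ) (hk : Continuous k) (x : ℝ) (hx : 0 < x)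
    (h : ∀ t ∈ Set.Ioo 0 x, 0 < k t) : 0 < ∫ t in (0:ℝ)..x, k t :=
  intervalIntegral.intervalIntegral_pos_of_pos_on (hk.intervalIntegrable _ _) h hx

lemma Lam_pos (q c : ℝ) (hq : 1 < q) (hc : c < 1) (Λ : ℝ → ℝ)
    (hΛ : ∀ x ∈ Set.Icc 0 c, Λ x = - Real.log (1 - x ^ q)) (x : ℝ) (hx : x ∈ Set.Ioo 0 c) :
    0 < Λ x := by
  obtain ⟨h0, h1⟩ := pow_facts q x hq hx.1 (hx.2.trans hc)
  rw [hΛ x ⟨hx.1.le, hx.2.le⟩]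
  have := Real.log_neg (x := 1 - x ^ q) (by linarith) (by linarith)
  linarith

lemma theta_le (q c p : ℝ) (hq : 1 < q) (hc : c < 1) (hp : 0 < p) (Λ : ℝ → ℝ)
    (hcont : Continuous Λ)
    (hΛ : ∀ x ∈ Set.Icc 0 c, Λ x = - Real.log (1 - x ^ q)) (x : ℝ) (hx : x ∈ Set.Ioo 0 c)
    (hR : (q - 1 + x ^ q) / (q * x ^ q) * Λ x ≤ 1) :
    q * x ^ (q - 1) / (1 - x ^ q) * (∫ t in (0:ℝ)..x, Λ t * Real.exp (1 / p * Λ t)) ≤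
      p * Λ x * Real.exp (1 / p * Λ x) := by
  set a : ℝ → ℝ := fun x => ∫ t in (0:ℝ)..x, Λ t * Real.exp (1 / p * Λ t) with ha
  set P : ℝ → ℝ := fun x => q * x ^ (q - 1) / (1 - x ^ q) with hP
  have hPpos : ∀ z ∈ Set.Ioo 0 c, 0 < P z := by
    intro z hz
    obtain ⟨h0, h1⟩ := pow_facts q z hq hz.1 (hz.2.trans hc)
    have := Real.rpow_pos_of_pos hz.1 (q - 1)
    have : 0 < 1 - z ^ q := by linarith
    simp only [hP]; positivity
  have hac : ∀ z, HasDerivAt a (Λ z * Real.exp (1 / p * Λ z)) z := fun z =>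
    ((by fun_prop : Continuous fun t => Λ t * Real.exp (1 / p * Λ t)).integral_hasStrictDerivAt
      0 z).hasDerivAt
  have hRz : ∀ z ∈ Set.Ioc 0 x, (q - 1 + z ^ q) / (q * z ^ q) * Λ z ≤ 1 := by
    intro z hz
    refine le_trans ?_ hR
    obtain ⟨h0, h1⟩ := pow_facts q z hq hz.1 (hz.2.trans_lt (hx.2.trans hc))
    obtain ⟨h0', h1'⟩ := pow_facts q x hq hx.1 (hx.2.trans hc)
    have hle : z ^ q ≤ x ^ q := Real.rpow_le_rpow hz.1.le hz.2 (by linarith)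
    have hm := Lv_mono _ _ h0 hle h1'
    rw [← hΛ z ⟨hz.1.le, hz.2.trans hx.2.le⟩, ← hΛ x ⟨hx.1.le, hx.2.le⟩] at hm
    have hm2 : Λ z ≤ Λ x := by
      rw [hΛ z ⟨hz.1.le, hz.2.trans hx.2.le⟩, hΛ x ⟨hx.1.le, hx.2.le⟩]
      have := Real.log_le_log (x := 1 - x ^ q) (y := 1 - z ^ q) (by linarith) (by linarith)
      linarith
    have e : ∀ v l : ℝ, 0 < v → (q - 1 + v) / (q * v) * l = ((q - 1) * (l / v) + l) / q := by
      intro v l hv; field_simp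
    rw [e _ _ h0, e _ _ h0']
    have : 0 ≤ q - 1 := by linarith
    gcongr
  have hD : ∀ z ∈ Set.Ioc 0 x, HasDerivAt (fun z => a z - p * Λ z * Real.exp (1 / p * Λ z) / P z)
      (-(p * Real.exp (1 / p * Λ z) * (1 - (q - 1 + z ^ q) / (q * z ^ q) * Λ z))) z := by
    intro z hz
    have hz' : z ∈ Set.Ioo 0 c := ⟨hz.1, hz.2.trans_lt hx.2⟩
    have hl := hasDerivAt_Lam q c hq hc Λ hΛ z hz'
    have hPd := hasDerivAt_P q z hq hz'.1 (hz'.2.trans hc)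
    have hp0 := hPpos z hz'
    have := (hac z).sub (((hl.const_mul p).mul ((hl.const_mul (1/p)).exp)).div hPd hp0.ne')
    refine this.congr_deriv ?_
    change _ - ((p * P z * _ + p * Λ z * (_ * (1 / p * P z))) * P z -
      p * Λ z * Real.exp (1 / p * Λ z) * (_ * P z ^ 2)) / P z ^ 2 = _
    generalize (q - 1 + z ^ q) / (q * z ^ q) = R
    generalize Real.exp _ = E
    field_simp
    ring
  have hanti : AntitoneOn (fun z => a z - p * Λ z * Real.exp (1 / p * Λ z) / P z) (Set.Ioc 0 x) := by
    refine antitoneOn_of_deriv_nonpos (convex_Ioc _ _) 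
      (fun z hz => (hD z hz).continuousAt.continuousWithinAt)
      (fun z hz => (hD z (interior_subset hz)).differentiableAt.differentiableWithinAt) ?_
    intro z hz
    rw [(hD z (interior_subset hz)).deriv]
    have := hRz z (interior_subset hz)
    have : 0 ≤ p * Real.exp (1 / p * Λ z) * (1 - (q - 1 + z ^ q) / (q * z ^ q) * Λ z) :=
      mul_nonneg (by positivity) (by linarith)
    linarith
  have hle : a x - p * Λ x * Real.exp (1 / p * Λ x) / P x ≤ a 0 := by
    refine ge_of_tendsto (x := nhdsWithin 0 (Set.Ioi 0)) ((hac 0).continuousAt.continuousWithinAt) ?_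
    filter_upwards [Ioo_mem_nhdsGT hx.1] with z hz
    have h := hanti ⟨hz.1, hz.2.le⟩ ⟨hx.1, le_rfl⟩ hz.2.le
    have hz' : z ∈ Set.Ioo 0 c := ⟨hz.1, hz.2.trans hx.2⟩
    have h1 := Lam_pos q c hq hc Λ hΛ z hz'
    have h2 := hPpos z hz'
    have : 0 < p * Λ z * Real.exp (1 / p * Λ z) / P z := by positivity
    simp only at h
    linarith
  have h0 : a 0 = 0 := by simp [ha]
  rw [h0] at hle
  have h2 := hPpos x hx
  have := (le_div_iff₀ h2).1 (sub_nonpos.1 hle)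
  rw [mul_comm]; exact this

lemma G_neg (q c p : ℝ) (hq : 1 < q) (hc : c < 1) (hp : 1 ≤ p) (Λ : ℝ → ℝ)
    (hcont : Continuous Λ)
    (hΛ : ∀ x ∈ Set.Icc 0 c, Λ x = - Real.log (1 - x ^ q)) (x : ℝ) (hx : x ∈ Set.Ioo 0 c)
    (hLp : Λ x ≤ 2 * p) :
    2 * Λ x * (∫ t in (0:ℝ)..x, Λ t * Real.exp (1 / p * Λ t))
      - (∫ t in (0:ℝ)..x, Λ t * Λ t * Real.exp (1 / p * Λ t))
      - 2 * p * (∫ t in (0:ℝ)..x, Λ t * Real.exp (1 / p * Λ t))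
      - q * x ^ (q - 1) / (1 - x ^ q) * (∫ t in (0:ℝ)..x, Λ t * Real.exp (1 / p * Λ t)) ^ 2 /
        (p * Real.exp (1 / p * Λ x)) < 0 := by
  set a : ℝ → ℝ := fun x => ∫ t in (0:ℝ)..x, Λ t * Real.exp (1 / p * Λ t) with ha
  set b : ℝ → ℝ := fun x => ∫ t in (0:ℝ)..x, Λ t * Λ t * Real.exp (1 / p * Λ t) with hb
  set P : ℝ → ℝ := fun x => q * x ^ (q - 1) / (1 - x ^ q) with hP
  have hp0 : 0 < p := by linarith
  have hPpos : ∀ z ∈ Set.Ioo 0 c, 0 < P z := by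
    intro z hz
    obtain ⟨h0, h1⟩ := pow_facts q z hq hz.1 (hz.2.trans hc)
    have := Real.rpow_pos_of_pos hz.1 (q - 1)
    have : 0 < 1 - z ^ q := by linarith
    simp only [hP]; positivity
  have hac : ∀ z, HasDerivAt a (Λ z * Real.exp (1 / p * Λ z)) z := fun z =>
    ((by fun_prop : Continuous fun t => Λ t * Real.exp (1 / p * Λ t)).integral_hasStrictDerivAt
      0 z).hasDerivAt
  have hbc : ∀ z, HasDerivAt b (Λ z * Λ z * Real.exp (1 / p * Λ z)) z := fun z =>
    ((by fun_prop : Continuous fun t => Λ t * Λ t * Real.exp (1 / p * Λ t)).integral_hasStrictDerivAt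
      0 z).hasDerivAt
  have hacont : Continuous a := continuous_iff_continuousAt.2 fun z => (hac z).continuousAt
  have hbcont : Continuous b := continuous_iff_continuousAt.2 fun z => (hbc z).continuousAt
  have hPc : ContinuousOn P (Set.Icc 0 x) := by
    refine ContinuousOn.div ?_ ?_ ?_
    · exact (continuous_const.mul (Real.continuous_rpow_const (by linarith))).continuousOn
    · exact (continuous_const.sub (Real.continuous_rpow_const (by linarith))).continuousOn
    · intro z hz
      have := Real.rpow_lt_one hz.1 (hz.2.trans_lt (hx.2.trans hc)) (z := q) (by linarith)
      linarith
  have hmono : ∀ z ∈ Set.Ioo 0 x, Λ z ≤ Λ x := by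
    intro z hz
    rw [hΛ z ⟨hz.1.le, hz.2.le.trans hx.2.le⟩, hΛ x ⟨hx.1.le, hx.2.le⟩]
    obtain ⟨h0', h1'⟩ := pow_facts q x hq hx.1 (hx.2.trans hc)
    have hle : z ^ q ≤ x ^ q := Real.rpow_le_rpow hz.1.le hz.2.le (by linarith)
    have := Real.log_le_log (x := 1 - x ^ q) (y := 1 - z ^ q) (by linarith) (by linarith)
    linarith
  have hanti : StrictAntiOn (fun z => 2 * Λ z * a z - b z - 2 * p * a z -
      P z * a z ^ 2 / (p * Real.exp (1 / p * Λ z))) (Set.Icc 0 x) := by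
    refine strictAntiOn_of_deriv_neg (convex_Icc _ _) ?_ ?_
    · refine ContinuousOn.sub (by fun_prop) (ContinuousOn.div (by fun_prop) (by fun_prop) ?_)
      intro z _; positivity
    · intro z hz
      rw [interior_Icc] at hz
      have hz' : z ∈ Set.Ioo 0 c := ⟨hz.1, hz.2.trans hx.2⟩
      have hl := hasDerivAt_Lam q c hq hc Λ hΛ z hz'
      have hPd := hasDerivAt_P q z hq hz'.1 (hz'.2.trans hc)
      have hE : (p * Real.exp (1 / p * Λ z)) ≠ 0 := by positivity
      have hd := ((((hl.const_mul 2).mul (hac z)).sub (hbc z)).sub ((hac z).const_mul (2 * p))).sub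
        ((hPd.mul ((hac z).pow 2)).div (((hl.const_mul (1/p)).exp).const_mul p) hE)
      have hd2 := hd.deriv
      refine lt_of_eq_of_lt hd2 ?_
      obtain ⟨h0, h1⟩ := pow_facts q z hq hz'.1 (hz'.2.trans hc)
      have := G_alg (Λ z) (Real.exp (1 / p * Λ z)) (a z) (P z) ((q - 1 + z ^ q) / (q * z ^ q)) p
        (Lam_pos q c hq hc Λ hΛ z hz') ((hmono z hz).trans hLp) hp
        (by rw [le_div_iff₀ (by positivity)]; nlinarith) (Real.exp_pos _)
        (int_pos _ (by fun_prop) z hz.1 fun t ht =>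
          mul_pos (Lam_pos q c hq hc Λ hΛ t ⟨ht.1, ht.2.trans hz'.2⟩) (Real.exp_pos _))
        (hPpos z hz') (fun h => theta_le q c p hq hc hp0 Λ hcont hΛ z hz' h)
      refine lt_of_eq_of_lt ?_ this
      change 2 * P z * _ + _ - _ - _ - ((_ * P z ^ 2 * a z ^ 2 + P z * _) * _ -
        P z * a z ^ 2 * (p * (_ * (1 / p * P z)))) / _ = _
      generalize (q - 1 + z ^ q) / (q * z ^ q) = R
      generalize Real.exp _ = E
      field_simp
      push_cast
      ring
  have := hanti ⟨le_rfl, hx.1.le⟩ ⟨hx.1.le, le_rfl⟩ hx.1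
  have h0 : a 0 = 0 := by simp [ha]
  have h0' : b 0 = 0 := by simp [hb]
  refine lt_of_lt_of_eq this ?_
  simp [h0, h0']

lemma seg (q c p1 p2 x1 m y : ℝ) (hq : 1 < q) (hc : c < 1) (hp1 : 1 ≤ p1) (hp : p1 < p2)
    (Λ : ℝ → ℝ) (hcont : Continuous Λ)
    (hΛ : ∀ x ∈ Set.Icc 0 c, Λ x = - Real.log (1 - x ^ q))
    (hX : ∀ p ∈ Set.Icc p1 p2, x1 + m * (p - p1) ∈ Set.Ioo 0 c ∧ Λ (x1 + m * (p - p1)) ≤ 2 * p)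
    (h1 : (∫ t in (0:ℝ)..(x1 + m * (p1 - p1)), 1 * Real.exp (1 / p1 * Λ t)) ≤ y)
    (h2 : (∫ t in (0:ℝ)..(x1 + m * (p2 - p1)), 1 * Real.exp (1 / p2 * Λ t)) ≤ y) :
    ∀ p ∈ Set.Icc p1 p2, (∫ t in (0:ℝ)..(x1 + m * (p - p1)), 1 * Real.exp (1 / p * Λ t)) ≤ y := by
  set X : ℝ → ℝ := fun p => x1 + m * (p - p1) with hXdef
  set f : ℝ → ℝ := fun p => ∫ t in (0:ℝ)..X p, 1 * Real.exp (1 / p * Λ t) with hf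
  set A : ℝ → ℝ := fun p => ∫ t in (0:ℝ)..X p, Λ t * Real.exp (1 / p * Λ t) with hA
  set B : ℝ → ℝ := fun p => ∫ t in (0:ℝ)..X p, Λ t * Λ t * Real.exp (1 / p * Λ t) with hB
  have hXd : ∀ p, HasDerivAt X m p := by
    intro p
    have := (((hasDerivAt_id p).sub_const p1).const_mul m).const_add x1
    refine this.congr_deriv ?_
    simp
  have hSd : ∀ p : ℝ, 0 < p → HasDerivAt (fun p : ℝ => 1 / p) (-(1 / p ^ 2)) p := by
    intro p hp
    have := hasDerivAt_inv hp.ne'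
    simpa [one_div] using! this
  have hfd : ∀ p, 0 < p → HasDerivAt f (m * Real.exp (1 / p * Λ (X p)) - 1 / p ^ 2 * A p) p := by
    intro p hp
    have := hasDerivAt_J (fun _ => 1) Λ continuous_const hcont X (fun p => 1 / p) m _ p (hXd p)
      (hSd p hp)
    refine this.congr_deriv ?_
    simp only [one_mul, hA]
    ring
  have hAd : ∀ p, 0 < p → HasDerivAt A (m * (Λ (X p) * Real.exp (1 / p * Λ (X p)))
      - 1 / p ^ 2 * B p) p := by
    intro p hp
    have := hasDerivAt_J Λ Λ hcont hcont X (fun p => 1 / p) m _ p (hXd p) (hSd p hp)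
    refine this.congr_deriv ?_
    simp only [hB]
    ring
  have hfc : ContinuousOn f (Set.Icc p1 p2) := fun p hpp =>
    (hfd p (by linarith [hpp.1])).continuousAt.continuousWithinAt
  obtain ⟨p, hpI, hmax⟩ := isCompact_Icc.exists_isMaxOn (Set.nonempty_Icc.2 hp.le) hfc
  suffices hle : f p ≤ y from fun r hr => (hmax hr).trans hle
  by_contra hlt
  rw [not_le] at hlt
  have hne1 : p1 ≠ p := by rintro rfl; exact absurd h1 (not_le.2 hlt)
  have hne2 : p ≠ p2 := by rintro rfl; exact absurd h2 (not_le.2 hlt)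
  have hpo : p ∈ Set.Ioo p1 p2 := ⟨lt_of_le_of_ne hpI.1 hne1, lt_of_le_of_ne hpI.2 hne2⟩
  have hlm : IsLocalMax f p := hmax.isLocalMax (Icc_mem_nhds hpo.1 hpo.2)
  have hp0 : 0 < p := by linarith [hpo.1]
  have hder0 := hlm.hasDerivAt_eq_zero (hfd p hp0)
  obtain ⟨hXp, hLp⟩ := hX p hpI
  have hG := G_neg q c p hq hc (by linarith [hpo.1]) Λ hcont hΛ (X p) hXp hLp
  have hl := hasDerivAt_Lam q c hq hc Λ hΛ (X p) hXp
  have hlX : HasDerivAt (fun p => Λ (X p)) _ p := hl.comp p (hXd p)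
  have hEd := (((hSd p hp0).mul hlX).exp).const_mul m
  have hinv : HasDerivAt (fun p : ℝ => 1 / p ^ 2) (-(2 / p ^ 3)) p := by
    have := ((hasDerivAt_pow 2 p).inv (by positivity))
    simp only [one_div]
    refine this.congr_deriv ?_
    field_simp
    norm_num
    ring
  have hd2 := hEd.sub (hinv.mul (hAd p hp0))
  have hev : deriv f =ᶠ[nhds p] fun p => m * Real.exp (1 / p * Λ (X p)) - 1 / p ^ 2 * A p := by
    filter_upwards [Ioi_mem_nhds hp0] with r hr using (hfd r hr).deriv
  have hdd := (hd2.congr_of_eventuallyEq hev).deriv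
  have hpos : 0 < deriv (deriv f) p := by
    rw [hdd]
    have hEpos := Real.exp_pos (1 / p * Λ (X p))
    have hm : m = A p / (p ^ 2 * Real.exp (1 / p * Λ (X p))) := by
      rw [eq_div_iff (by positivity)]
      have h3 : 1 / p ^ 2 * A p * p ^ 2 = A p := by field_simp
      nlinarith
    change (2 * Λ (X p) * A p - B p - 2 * p * A p - _ * A p ^ 2 / _) < 0 at hG
    have hG2 := mul_pos_of_neg_of_neg hG (show -(1 / p ^ 4) < 0 by
      have : 0 < 1 / p ^ 4 := by positivity
      linarith)
    refine lt_of_lt_of_eq hG2 ?_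
    simp only [Pi.mul_apply]
    generalize q * X p ^ (q - 1) / (1 - X p ^ q) = P at *
    generalize Real.exp (1 / p * Λ (X p)) = E at *
    generalize A p = a at *
    generalize B p = b at *
    generalize Λ (X p) = L at *
    subst hm
    field_simp
    ring
  have hmin := isLocalMin_of_deriv_deriv_pos hpos ((hfd p hp0).deriv.trans hder0)
    (hfd p hp0).continuousAt
  have hconst : f =ᶠ[nhds p] fun _ => f p := by
    filter_upwards [hlm, hmin] with r hr1 hr2 using le_antisymm hr1 hr2
  have h5 := hconst.deriv.deriv_eq
  simp at h5
  linarith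

lemma contOn (q r x : ℝ) (hq : 1 < q) (hx : x < 1) :
    ContinuousOn (fun t : ℝ => (1 - t ^ q) ^ r) (Set.Icc 0 x) := by
  refine ContinuousOn.rpow_const ?_ ?_
  · exact (continuous_const.sub (Real.continuous_rpow_const (by linarith))).continuousOn
  · intro z hz
    have := Real.rpow_lt_one hz.1 (hz.2.trans_lt hx) (z := q) (by linarith)
    exact Or.inl (by linarith)

lemma y_le (q p x : ℝ) (hq : 1 < q) (hp : 1 < p) (hx0 : 0 < x) (hx : x < 1) :
    (∫ t in (0:ℝ)..x, (1 - t ^ q) ^ (-(1 / p))) ≤ p / (p - 1) := by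
  have hp1 : 1 / p < 1 := by rw [div_lt_one (by linarith)]; exact hp
  have hp2 : 0 < 1 / p := by positivity
  have hle : (∫ t in (0:ℝ)..x, (1 - t ^ q) ^ (-(1 / p))) ≤
      ∫ t in (0:ℝ)..x, (1 - t) ^ (-(1 / p)) := by
    refine intervalIntegral.integral_mono_on hx0.le ?_ ?_ ?_
    · exact (contOn q _ x hq hx).intervalIntegrable_of_Icc hx0.le
    · refine ContinuousOn.intervalIntegrable_of_Icc hx0.le (ContinuousOn.rpow_const (by fun_prop) ?_)
      intro z hz; left; linarith [hz.2]
    · intro t ht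
      refine Real.rpow_le_rpow_of_nonpos (by linarith [ht.2]) ?_ (by linarith)
      have : t ^ q ≤ t ^ (1:ℝ) := by
        rcases ht.1.eq_or_lt with h | h
        · rw [← h]; rw [Real.zero_rpow (by linarith)]; simp
        · exact Real.rpow_le_rpow_of_exponent_ge h (by linarith [ht.2]) hq.le
      rw [Real.rpow_one] at this
      linarith
  refine hle.trans ?_
  rw [intervalIntegral.integral_comp_sub_left (fun u : ℝ => u ^ (-(1/p))) 1,
    integral_rpow (Or.inl (by linarith))]
  have h1 : 0 ≤ (1 - x) ^ (-(1/p) + 1) := Real.rpow_nonneg (by linarith) _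
  have e : p / (p - 1) = 1 / (-(1/p) + 1) := by
    have : p - 1 ≠ 0 := by linarith
    have : -(1/p) + 1 ≠ 0 := by linarith
    have : -1 + p ≠ 0 := by linarith
    field_simp
    ring
  rw [e, sub_zero, Real.one_rpow]
  have : 0 < -(1/p) + 1 := by linarith
  gcongr
  linarith

lemma L_le (q p x : ℝ) (hq : 1 < q) (hp : 1 < p) (hx0 : 0 < x) (hx : x < 1)
    (h : (∫ t in (0:ℝ)..x, (1 - t ^ q) ^ (-(1 / p))) ≤ 1) :
    - Real.log (1 - x ^ q) ≤ 2 * p := by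
  by_contra hcon
  rw [not_le] at hcon
  obtain ⟨h0, h1⟩ := pow_facts q x hq hx0 hx
  have hp0 : 0 < p := by linarith
  have hlow : (∫ t in (0:ℝ)..x, (1 + t ^ q / p)) ≤ ∫ t in (0:ℝ)..x, (1 - t ^ q) ^ (-(1 / p)) := by
    refine intervalIntegral.integral_mono_on hx0.le ?_ ?_ ?_
    · exact (continuous_const.add ((Real.continuous_rpow_const (by linarith)).div_const
        _)).intervalIntegrable _ _
    · exact (contOn q _ x hq hx).intervalIntegrable_of_Icc hx0.le
    · intro t ht
      have ht1 := Real.rpow_lt_one ht.1 (ht.2.trans_lt hx) (z := q) (by linarith)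
      have hpos : 0 < 1 - t ^ q := by linarith
      rw [Real.rpow_def_of_pos hpos]
      have e1 := Real.add_one_le_exp (Real.log (1 - t ^ q) * -(1 / p))
      have e2 := Real.log_le_sub_one_of_pos hpos
      have e3 : t ^ q / p ≤ Real.log (1 - t ^ q) * -(1 / p) := by
        have : t ^ q / p = (- t ^ q) * (-(1/p)) := by ring
        rw [this]
        have : 0 < 1 / p := by positivity
        nlinarith
      linarith
  have hval : (∫ t in (0:ℝ)..x, (1 + t ^ q / p)) = x * (1 + x ^ q / (p * (q + 1))) := by
    rw [intervalIntegral.integral_add (by simp)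
      (((Real.continuous_rpow_const (by linarith)).div_const _).intervalIntegrable _ _),
      intervalIntegral.integral_div, integral_rpow (Or.inl (by linarith)),
      Real.zero_rpow (by linarith), Real.rpow_add_one hx0.ne']
    simp
    field_simp
  set v := x ^ q with hv
  have hs : x * (1 + v / (p * (q + 1))) ≤ 1 := by rw [← hval]; exact hlow.trans h
  have hspos : 0 ≤ v / (p * (q + 1)) := by positivity
  have hpow : (x * (1 + v / (p * (q + 1)))) ^ q ≤ 1 :=
    Real.rpow_le_one (by positivity) hs (by linarith)
  rw [Real.mul_rpow hx0.le (by positivity), ← hv] at hpow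
  have hbern := one_add_mul_self_le_rpow_one_add (show -1 ≤ v / (p * (q + 1)) by linarith) hq.le
  have hge : v / (2 * p) ≤ q * (v / (p * (q + 1))) := by
    rw [← mul_div_assoc, div_le_div_iff₀ (by positivity) (by positivity)]
    have : 0 < v * p := by positivity
    nlinarith
  have hfin : v * (1 + v / (2 * p)) ≤ 1 := by
    refine le_trans ?_ hpow
    gcongr
    linarith
  -- v > 1 - exp(-2p)
  have hexp : 1 - v < Real.exp (-(2 * p)) := by
    rw [← Real.log_lt_iff_lt_exp (by linarith)]; linarith
  have hq2 := Real.quadratic_le_exp_of_nonneg (show 0 ≤ 2 * p by linarith)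
  have hprod : (1 - v) * (1 + 2 * p + (2 * p) ^ 2 / 2) < 1 := by
    have : (1 - v) * Real.exp (2 * p) < 1 := by
      calc _ < Real.exp (-(2 * p)) * Real.exp (2 * p) := by gcongr
        _ = 1 := by rw [← Real.exp_add]; simp
    have : (1 - v) * (1 + 2 * p + (2 * p) ^ 2 / 2) ≤ (1 - v) * Real.exp (2 * p) := by
      apply mul_le_mul_of_nonneg_left hq2 (by linarith)
    linarith
  have hD : 0 < 1 + 2 * p + 2 * p ^ 2 := by positivity
  have hvge : (2 * p + 2 * p ^ 2) / (1 + 2 * p + 2 * p ^ 2) ≤ v := by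
    rw [div_le_iff₀ hD]; nlinarith
  have hw : (2 * p + 2 * p ^ 2) / (1 + 2 * p + 2 * p ^ 2) *
      (1 + (2 * p + 2 * p ^ 2) / (1 + 2 * p + 2 * p ^ 2) / (2 * p)) ≤ 1 := by
    refine le_trans ?_ hfin
    gcongr
  have e : (2 * p + 2 * p ^ 2) / (1 + 2 * p + 2 * p ^ 2) *
      (1 + (2 * p + 2 * p ^ 2) / (1 + 2 * p + 2 * p ^ 2) / (2 * p)) =
      ((2 * p + 2 * p ^ 2) * (2 + 3 * p + 2 * p ^ 2)) / (1 + 2 * p + 2 * p ^ 2) ^ 2 := by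
    field_simp
    ring
  rw [e, div_le_one (by positivity)] at hw
  have : 1 < p ^ 2 := by nlinarith
  have : 0 < p ^ 3 := by positivity
  nlinarith

theorem sin_pq_concave_in_p (q y : ℝ) (hq : 1 < q) (hy : 0 < y) (g : ℝ → ℝ)
    (hg : ∀ p : ℝ, 1 < p → g p ∈ Set.Ioo (0:ℝ) 1 ∧
      (∫ t in (0:ℝ)..g p, (1 - t ^ q) ^ (-(1 / p))) = y) :
    ConcaveOn ℝ (Set.Ioi (1:ℝ)) g := by
  have hy1 : y ≤ 1 := by
    refine le_of_forall_pos_le_add fun ε hε => ?_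
    have hp : 1 < 1 + 1 / ε := by
      have : 0 < 1 / ε := by positivity
      linarith
    have := hg _ hp
    have h2 := y_le q _ _ hq hp this.1.1 this.1.2
    rw [this.2] at h2
    refine h2.trans (le_of_eq ?_)
    field_simp
    ring
  have hL : ∀ p, 1 < p → - Real.log (1 - g p ^ q) ≤ 2 * p := fun p hp =>
    L_le q p _ hq hp (hg p hp).1.1 (hg p hp).1.2 ((hg p hp).2.le.trans hy1)
  refine LinearOrder.concaveOn_of_lt (convex_Ioi 1) ?_
  intro p1 hp1 p2 hp2 hlt a b ha hb hab
  simp only [smul_eq_mul]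
  rw [Set.mem_Ioi] at hp1 hp2
  obtain ⟨⟨hx1, hx1'⟩, hI1⟩ := hg p1 hp1
  obtain ⟨⟨hx2, hx2'⟩, hI2⟩ := hg p2 hp2
  have hL1 := hL p1 hp1
  have hL2 := hL p2 hp2
  set x1 := g p1 with hx1d
  set x2 := g p2 with hx2d
  set c := (max x1 x2 + 1) / 2 with hcd
  have hm1 := le_max_left x1 x2
  have hm2 := le_max_right x1 x2
  have hm3 : max x1 x2 < 1 := max_lt hx1' hx2'
  have hc1 : c < 1 := by linarith
  have hcx1 : x1 < c := by linarith
  have hcx2 : x2 < c := by linarith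
  have hc0 : 0 < c := by linarith
  set Λ : ℝ → ℝ := fun t => - Real.log (1 - (max 0 (min t c)) ^ q) with hΛd
  have hcont : Continuous Λ := by
    refine (Continuous.log (continuous_const.sub
      ((Real.continuous_rpow_const (by linarith)).comp (by fun_prop : Continuous fun t : ℝ => max 0 (min t c)))) ?_).neg
    intro t
    have h1 : max 0 (min t c) < 1 := max_lt one_pos ((min_le_right _ _).trans_lt hc1)
    have := Real.rpow_lt_one (le_max_left 0 (min t c)) h1 (z := q) (by linarith)
    exact (sub_pos.2 this).ne'
  have hΛ : ∀ x ∈ Set.Icc 0 c, Λ x = - Real.log (1 - x ^ q) := by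
    intro x hx
    simp only [hΛd]
    rw [min_eq_left hx.2, max_eq_right hx.1]
  have hcongr : ∀ x p, 0 < x → x < c → (∫ t in (0:ℝ)..x, 1 * Real.exp (1 / p * Λ t)) =
      ∫ t in (0:ℝ)..x, (1 - t ^ q) ^ (-(1 / p)) := by
    intro x p hx hxc
    refine intervalIntegral.integral_congr ?_
    intro t ht
    rw [Set.uIcc_of_le hx.le] at ht
    have ht1 := Real.rpow_lt_one ht.1 (ht.2.trans_lt (hxc.trans hc1)) (z := q) (by linarith)
    simp only
    rw [hΛ t ⟨ht.1, ht.2.trans hxc.le⟩, Real.rpow_def_of_pos (sub_pos.2 ht1)]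
    rw [one_mul]; congr 1; ring
  have hcomb : ∀ a b : ℝ, 0 ≤ a → 0 ≤ b → a + b = 1 → a * x1 + b * x2 ∈ Set.Ioo 0 c ∧
      Λ (a * x1 + b * x2) ≤ 2 * (a * p1 + b * p2) := by
    intro a b ha hb hab
    have hmem : a * x1 + b * x2 ∈ Set.Ioo 0 c :=
      (convex_Ioo 0 c) ⟨hx1, hcx1⟩ ⟨hx2, hcx2⟩ ha hb hab
    refine ⟨hmem, ?_⟩
    rw [hΛ _ ⟨hmem.1.le, hmem.2.le⟩]
    have hconv := (convexOn_rpow hq.le).2 (show x1 ∈ Set.Ici 0 from hx1.le)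
      (show x2 ∈ Set.Ici 0 from hx2.le) ha hb hab
    simp only [smul_eq_mul] at hconv
    have hv1 := pow_facts q x1 hq hx1 hx1'
    have hv2 := pow_facts q x2 hq hx2 hx2'
    have hm1 : 1 - x1 ^ q ∈ Set.Ioi (0:ℝ) := by simp only [Set.mem_Ioi]; linarith
    have hm2 : 1 - x2 ^ q ∈ Set.Ioi (0:ℝ) := by simp only [Set.mem_Ioi]; linarith
    have hlog := strictConcaveOn_log_Ioi.concaveOn.2 hm1 hm2 ha hb hab
    have hpos := (convex_Ioi (0:ℝ)) hm1 hm2 ha hb hab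
    simp only [smul_eq_mul, Set.mem_Ioi] at hlog hpos
    have hmono := Real.log_le_log hpos
      (show a * (1 - x1 ^ q) + b * (1 - x2 ^ q) ≤ 1 - (a * x1 + b * x2) ^ q by nlinarith)
    nlinarith
  have hd : 0 < p2 - p1 := by linarith
  have hseg := seg q c p1 p2 x1 ((x2 - x1) / (p2 - p1)) y hq hc1 hp1.le hlt Λ hcont hΛ
    (by
      intro p hp
      have h := hcomb ((p2 - p) / (p2 - p1)) ((p - p1) / (p2 - p1))
        (div_nonneg (by linarith [hp.2]) hd.le) (div_nonneg (by linarith [hp.1]) hd.le)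
        (by field_simp; ring)
      have e1 : (p2 - p) / (p2 - p1) * x1 + (p - p1) / (p2 - p1) * x2 =
          x1 + (x2 - x1) / (p2 - p1) * (p - p1) := by field_simp; ring
      have e2 : (p2 - p) / (p2 - p1) * p1 + (p - p1) / (p2 - p1) * p2 = p := by field_simp; ring
      rw [e1, e2] at h
      exact h)
    (by rw [sub_self, mul_zero, add_zero, hcongr x1 p1 hx1 hcx1]; exact hI1.le)
    (by
      rw [show x1 + (x2 - x1) / (p2 - p1) * (p2 - p1) = x2 by field_simp; ring,
        hcongr x2 p2 hx2 hcx2]; exact hI2.le)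
    (a * p1 + b * p2) ⟨by nlinarith, by nlinarith⟩
  have hb' : a = 1 - b := by linarith
  have ew : x1 + (x2 - x1) / (p2 - p1) * (a * p1 + b * p2 - p1) = a * x1 + b * x2 := by
    subst hb'
    field_simp
    ring
  obtain ⟨hw, -⟩ := hcomb a b ha.le hb.le hab
  rw [ew, hcongr _ _ hw.1 hw.2] at hseg
  have hp : 1 < a * p1 + b * p2 := by nlinarith
  obtain ⟨⟨hx, hx'⟩, hI⟩ := hg _ hp
  set p := a * p1 + b * p2
  set w := a * x1 + b * x2
  by_contra hcon
  rw [not_le] at hcon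
  have hw1 : w < 1 := hw.2.trans hc1
  have hcw := contOn q (-(1 / p)) w hq hw1
  have i1 : IntervalIntegrable (fun t : ℝ => (1 - t ^ q) ^ (-(1 / p))) volume 0 (g p) :=
    (hcw.mono (Set.Icc_subset_Icc_right hcon.le)).intervalIntegrable_of_Icc hx.le
  have i2 : IntervalIntegrable (fun t : ℝ => (1 - t ^ q) ^ (-(1 / p))) volume (g p) w :=
    (hcw.mono (Set.Icc_subset_Icc_left hx.le)).intervalIntegrable_of_Icc hcon.le
  have hadd := intervalIntegral.integral_add_adjacent_intervals i1 i2
  have hpos := intervalIntegral.intervalIntegral_pos_of_pos_on i2 (by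
    intro t ht
    have := Real.rpow_lt_one (hx.le.trans ht.1.le) (ht.2.trans hw1) (z := q) (by linarith)
    exact Real.rpow_pos_of_pos (by linarith) _) hcon
  linarith
end

section
/- Fix p > 1 and y > 0, and let g : ℝ → ℝ satisfy g(q) ∈ (0,1) and ∫_0^{g(q)} (1-t^q)^{-1/p} dt = y for every q > 1. Then g is concave on the interval (1,∞). In other words, for each fixed y and p > 1 the function q ↦ sin_{p,q}(y) is concave on (1,∞). -/
open MeasureTheory

lemma mc_bounds (a : ℝ) (ha : 0 < a) (ha1 : a < 1) (n : ℕ) :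
    0 ≤ Ring.multichoose a n ∧ Ring.multichoose a n ≤ 1 := by
  have h := Ring.factorial_nsmul_multichoose_eq_ascPochhammer a n
  rw [Polynomial.ascPochhammer_smeval_eq_eval, nsmul_eq_mul] at h
  have hb : ∀ n : ℕ, 0 ≤ (ascPochhammer ℝ n).eval a ∧ (ascPochhammer ℝ n).eval a ≤ n.factorial := by
    intro n
    induction n with
    | zero => simp
    | succ k ih =>
      rw [ascPochhammer_succ_eval, Nat.factorial_succ]
      push_cast
      have hk : (0:ℝ) ≤ k := Nat.cast_nonneg k
      constructor
      · exact mul_nonneg ih.1 (by linarith)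
      · rw [mul_comm]
        exact mul_le_mul (by linarith) ih.2 ih.1 (by linarith)
  have hf : (0:ℝ) < n.factorial := by exact_mod_cast n.factorial_pos
  have := hb n
  rw [← h] at this
  constructor
  · exact nonneg_of_mul_nonneg_right this.1 hf
  · by_contra hc
    push Not at hc
    nlinarith

lemma series_pt (a : ℝ) (u : ℝ) (hu : 0 ≤ u) (hu1 : u < 1) :
    HasSum (fun n : ℕ => Ring.multichoose a n * u ^ n) ((1 - u) ^ (-a)) := by
  have h := (Real.one_div_one_sub_rpow_hasFPowerSeriesOnBall_zero a).hasSum (y := u)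
    (by simp [abs_of_nonneg hu, hu1, Metric.mem_eball, edist_dist])
  simp only [FormalMultilinearSeries.ofScalars_apply_eq, zero_add, smul_eq_mul] at h
  rw [one_div, ← Real.rpow_neg (by linarith)] at h
  simpa [Ring.multichoose_eq] using h

lemma series_int (a : ℝ) (ha : 0 < a) (ha1 : a < 1) (x q : ℝ) (hx : 0 < x) (hx1 : x < 1)
    (hq : 1 < q) :
    HasSum (fun n : ℕ => Ring.multichoose a n * (x ^ (n * q + 1) / (n * q + 1)))
      (∫ t in (0:ℝ)..x, (1 - t ^ q) ^ (-a)) := by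
  have hX0 : 0 ≤ x ^ q := by positivity
  have hX1 : x ^ q < 1 := Real.rpow_lt_one hx.le hx1 (by linarith)
  have key := intervalIntegral.hasSum_integral_of_dominated_convergence
    (μ := volume) (a := 0) (b := x)
    (F := fun (n : ℕ) (t : ℝ) => Ring.multichoose a n * t ^ (n * q))
    (f := fun t => (1 - t ^ q) ^ (-a)) (fun n _ => (x ^ q) ^ n) ?_ ?_ ?_ ?_ ?_
  · refine Eq.mp (congrArg (fun f => HasSum f _) (funext fun n => ?_)) key
    rw [intervalIntegral.integral_const_mul, integral_rpow]
    · have : (n : ℝ) * q + 1 ≠ 0 := by positivity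
      rw [Real.zero_rpow this, sub_zero]
    · left
      have : 0 ≤ (n : ℝ) * q := by positivity
      linarith
  · intro n
    exact (Measurable.aestronglyMeasurable (by fun_prop))
  · intro n
    filter_upwards with t ht
    rw [Set.uIoc_of_le hx.le] at ht
    rw [norm_mul, Real.norm_of_nonneg (mc_bounds a ha ha1 n).1,
      Real.norm_of_nonneg (Real.rpow_nonneg ht.1.le _), mul_comm (n:ℝ), Real.rpow_mul ht.1.le,
      Real.rpow_natCast]
    have h1 : t ^ q ≤ x ^ q := Real.rpow_le_rpow ht.1.le ht.2 (by linarith)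
    have h0 : 0 ≤ t ^ q := Real.rpow_nonneg ht.1.le _
    calc _ ≤ 1 * (t ^ q) ^ n := by gcongr; exact (mc_bounds a ha ha1 n).2
      _ ≤ _ := by rw [one_mul]; gcongr
  · filter_upwards with t ht
    exact summable_geometric_of_lt_one hX0 hX1
  · exact intervalIntegrable_const
  · filter_upwards with t ht
    rw [Set.uIoc_of_le hx.le] at ht
    have h1 : t ^ q ≤ x ^ q := Real.rpow_le_rpow ht.1.le ht.2 (by linarith)
    have h0 : 0 ≤ t ^ q := Real.rpow_nonneg ht.1.le _
    have := series_pt a (t ^ q) h0 (by linarith)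
    refine Eq.mp (congrArg (fun f => HasSum f _) (funext fun n => ?_)) this
    rw [mul_comm (n:ℝ), Real.rpow_mul ht.1.le, Real.rpow_natCast]

/-- quadratic inequality -/
lemma quad_nonneg (n r l w : ℝ) (hn : 1 ≤ n) (hr : 1 < r) (hl : 0 < l) (hw : 0 ≤ w)
    (h : l ≤ 1.36 ∨ (l ≤ 2 ∧ w * (r + 1) ≤ l) ∨ 2 * w * (r + 1) ≤ l) :
    0 ≤ n ^ 2 * (l ^ 2 + 2 * l / (n * r + 1) + 2 / (n * r + 1) ^ 2) - 2 * n * l * (n * r + 1) * w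
      + (n * r + 1) * n * r * w ^ 2 := by
  have hnr : 1 ≤ n * r := by nlinarith
  obtain ⟨v, hv⟩ : ∃ v, v = 1 / (n * r + 1) := ⟨_, rfl⟩
  have hv0 : 0 < v := by rw [hv]; positivity
  have hv2 : v ≤ 1 / 2 := by
    rw [hv]; apply one_div_le_one_div_of_le <;> linarith
  have e1 : n ^ 2 * (l ^ 2 + 2 * l / (n * r + 1) + 2 / (n * r + 1) ^ 2)
      - 2 * n * l * (n * r + 1) * w + (n * r + 1) * n * r * w ^ 2 
      = n ^ 2 * (l ^ 2 + 2 * l * v + 2 * v ^ 2) - 2 * n * l * ((n * r + 1) * w)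
        + (1 - v) * ((n * r + 1) * w) ^ 2 := by
    rw [hv]; field_simp; ring
  rw [e1]
  have hz : (n * r + 1) * w ≤ n * (w * (r + 1)) := by nlinarith
  have hz0 : 0 ≤ (n * r + 1) * w := by positivity
  set z := (n * r + 1) * w
  rcases h with h | ⟨h2, h⟩ | h
  · -- multiply by (1-v)
    have h3 : l ^ 2 ≤ 2 * (1 - v) * (l + v) := by
      nlinarith [mul_nonneg hv0.le (sub_nonneg.2 hv2), mul_nonneg hl.le (sub_nonneg.2 hv2),
        mul_nonneg hl.le (sub_nonneg.2 h)]
    have h4 : 0 ≤ (1 - v) * (n ^ 2 * (l ^ 2 + 2 * l * v + 2 * v ^ 2) - 2 * n * l * z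
        + (1 - v) * z ^ 2) := by
      have : (1 - v) * (n ^ 2 * (l ^ 2 + 2 * l * v + 2 * v ^ 2) - 2 * n * l * z
        + (1 - v) * z ^ 2) = ((1 - v) * z - n * l) ^ 2
          + n ^ 2 * v * (2 * (1 - v) * (l + v) - l ^ 2) := by ring
      rw [this]
      have : 0 ≤ n ^ 2 * v * (2 * (1 - v) * (l + v) - l ^ 2) :=
        mul_nonneg (by positivity) (by linarith)
      positivity
    exact nonneg_of_mul_nonneg_right h4 (by linarith)
  · have hzz : z ≤ n * l := hz.trans (by gcongr)
    have : n ^ 2 * (l ^ 2 + 2 * l * v + 2 * v ^ 2) - 2 * n * l * z + (1 - v) * z ^ 2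
      = (n * l - z) ^ 2 + v * ((n * l) ^ 2 - z ^ 2) + n ^ 2 * v * (l * (2 - l)) + 2 * (n * v) ^ 2 := by
      ring
    rw [this]
    have a1 : 0 ≤ (n * l) ^ 2 - z ^ 2 := by nlinarith
    have a2 : 0 ≤ l * (2 - l) := mul_nonneg hl.le (by linarith)
    positivity
  · have hzz : 2 * z ≤ n * l := by nlinarith
    have a1 : 0 ≤ n * l * (n * l - 2 * z) := mul_nonneg (by positivity) (by linarith)
    have a2 : 0 ≤ (1 - v) * z ^ 2 := mul_nonneg (by linarith) (by positivity)
    have a3 : 0 ≤ n ^ 2 * (2 * l * v + 2 * v ^ 2) := by positivity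
    nlinarith

lemma term_convex (n : ℕ) (x0 m q0 q1 : ℝ) (hq0 : 1 < q0) (hm : 0 ≤ m)
    (hX : ∀ r ∈ Set.Icc q0 q1, 0 < x0 + m * (r - q0) ∧ x0 + m * (r - q0) < 1)
    (hc : ∀ r ∈ Set.Icc q0 q1, -Real.log (x0 + m * (r - q0)) ≤ 1.36 ∨
      (-Real.log (x0 + m * (r - q0)) ≤ 2 ∧
        m / (x0 + m * (r - q0)) * (r + 1) ≤ -Real.log (x0 + m * (r - q0))) ∨
      2 * (m / (x0 + m * (r - q0))) * (r + 1) ≤ -Real.log (x0 + m * (r - q0))) :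
    ConvexOn ℝ (Set.Icc q0 q1)
      (fun r : ℝ => (x0 + m * (r - q0)) ^ (n * r + 1) / (n * r + 1)) := by
  have d1 : ∀ r ∈ Set.Icc q0 q1, HasDerivAt
      (fun r : ℝ => (x0 + m * (r - q0)) ^ (n * r + 1) / (n * r + 1))
      ((x0 + m * (r - q0)) ^ (n * r + 1) / (n * r + 1) *
        (n * Real.log (x0 + m * (r - q0)) + (n * r + 1) * m / (x0 + m * (r - q0))
          - n / (n * r + 1))) r := by
    intro r hr
    have hXr := (hX r hr).1
    have hs : 0 < (n : ℝ) * r + 1 := by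
      have : 0 < r := by linarith [hr.1]
      positivity
    have h1 : HasDerivAt (fun r : ℝ => x0 + m * (r - q0)) m r := by
      simpa using (((hasDerivAt_id r).sub_const q0).const_mul m).const_add x0
    have h2 : HasDerivAt (fun r : ℝ => (n : ℝ) * r + 1) n r := by
      simpa using ((hasDerivAt_id r).const_mul (n : ℝ)).add_const 1
    have h3 := (h1.rpow h2 hXr).div h2 hs.ne'
    convert! h3 using 1
    rw [Real.rpow_sub_one hXr.ne']
    have hs' := hs.ne'
    generalize (x0 + m * (r - q0)) ^ (n * r + 1) = P
    generalize Real.log (x0 + m * (r - q0)) = L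
    clear h1 h2 h3
    generalize x0 + m * (r - q0) = X at *
    generalize (n : ℝ) * r + 1 = s at *
    field_simp
    ring
  have d2 : ∀ r ∈ Set.Icc q0 q1, HasDerivAt
      (fun r : ℝ => (x0 + m * (r - q0)) ^ (n * r + 1) / (n * r + 1) *
        (n * Real.log (x0 + m * (r - q0)) + (n * r + 1) * m / (x0 + m * (r - q0))
          - n / (n * r + 1)))
      ((x0 + m * (r - q0)) ^ (n * r + 1) / (n * r + 1) *
        ((n : ℝ) ^ 2 * ((-Real.log (x0 + m * (r - q0))) ^ 2
          + 2 * (-Real.log (x0 + m * (r - q0))) / (n * r + 1) + 2 / (n * r + 1) ^ 2)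
          - 2 * n * (-Real.log (x0 + m * (r - q0))) * (n * r + 1) * (m / (x0 + m * (r - q0)))
          + (n * r + 1) * n * r * (m / (x0 + m * (r - q0))) ^ 2)) r := by
    intro r hr
    have hXr := (hX r hr).1
    have hs : 0 < (n : ℝ) * r + 1 := by
      have : 0 < r := by linarith [hr.1]
      positivity
    have h1 : HasDerivAt (fun r : ℝ => x0 + m * (r - q0)) m r := by
      simpa using (((hasDerivAt_id r).sub_const q0).const_mul m).const_add x0
    have h2 : HasDerivAt (fun r : ℝ => (n : ℝ) * r + 1) n r := by
      simpa using ((hasDerivAt_id r).const_mul (n : ℝ)).add_const 1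
    have h3 := (d1 r hr).mul ((((h1.log hXr.ne').const_mul (n : ℝ)).add
      ((h2.mul_const m).div h1 hXr.ne')).sub ((hasDerivAt_const r (n : ℝ)).div h2 hs.ne'))
    convert! h3 using 1
    simp only [Pi.add_apply, Pi.sub_apply, Pi.div_apply]
    generalize (x0 + m * (r - q0)) ^ (n * r + 1) = P
    generalize Real.log (x0 + m * (r - q0)) = L
    generalize x0 + m * (r - q0) = X at *
    field_simp
    ring
  refine convexOn_of_hasDerivWithinAt2_nonneg (convex_Icc _ _)
    (fun r hr => (d1 r hr).continuousAt.continuousWithinAt)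
    (fun r hr => (d1 r (interior_subset hr)).hasDerivWithinAt)
    (fun r hr => (d2 r (interior_subset hr)).hasDerivWithinAt) ?_
  intro r hr
  have hr := interior_subset hr
  have hXr := (hX r hr).1
  have hr1 : 1 < r := by linarith [hr.1]
  apply mul_nonneg
  · positivity
  · rcases Nat.eq_zero_or_pos n with h0 | h0
    · simp [h0]
    · exact quad_nonneg n r _ _ (by exact_mod_cast h0) hr1
        (by linarith [Real.log_neg hXr (hX r hr).2]) (by positivity) (hc r hr)

lemma term_diff (n : ℕ) (x q0 q1 : ℝ) (hx : 0 < x) (hx1 : x < 1) (hq0 : 1 < q0) (hq : q0 < q1) :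
    x ^ (n * q0 + 1) / (n * q0 + 1) - x ^ (n * q1 + 1) / (n * q1 + 1) ≤
      (q1 - q0) / (q1 + 1) * (x * (1 + 2 * (-Real.log x))) * (if n = 0 then 0 else x ^ n) := by
  split_ifs with h0
  · simp [h0]
  have hn : (1:ℝ) ≤ n := by exact_mod_cast Nat.one_le_iff_ne_zero.2 h0
  have hl : 0 < -Real.log x := by linarith [Real.log_neg hx hx1]
  set l := -Real.log x with hldef
  have hE1 : x ^ (n * q0) * (1 - n * (q1 - q0) * l) ≤ x ^ (n * q1) := by
    have : x ^ (n * q1) = x ^ (n * q0) * Real.exp (-(n * (q1 - q0) * l)) := by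
      rw [hldef, Real.rpow_def_of_pos hx, Real.rpow_def_of_pos hx, ← Real.exp_add]
      ring_nf
    rw [this]
    gcongr
    linarith [Real.add_one_le_exp (-(n * (q1 - q0) * l))]
  have hE0 : x ^ (n * q0) ≤ x ^ n := by
    rw [← Real.rpow_natCast]
    exact Real.rpow_le_rpow_of_exponent_ge hx hx1.le (by nlinarith)
  have hE0' : 0 < x ^ (n * q0) := by positivity
  rw [Real.rpow_add_one hx.ne', Real.rpow_add_one hx.ne']
  set E0 := x ^ (n * q0)
  set E1 := x ^ (n * q1)
  have hs0 : 2 ≤ n * q0 + 1 := by nlinarith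
  have hs1 : 0 < n * q1 + 1 := by nlinarith
  have hd : 0 < q1 - q0 := by linarith
  have hq1 : 0 < q1 + 1 := by linarith
  have hr : n / (n * q1 + 1) ≤ 2 / (q1 + 1) := by
    rw [div_le_div_iff₀ hs1 hq1]; nlinarith
  calc E0 * x / (n * q0 + 1) - E1 * x / (n * q1 + 1)
      ≤ E0 * x / (n * q0 + 1) - (E0 * (1 - n * (q1 - q0) * l)) * x / (n * q1 + 1) := by gcongr
    _ = E0 * x * (q1 - q0) * (n / (n * q1 + 1)) * (1 / (n * q0 + 1) + l) := by
      field_simp; ring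
    _ ≤ x ^ n * x * (q1 - q0) * (2 / (q1 + 1)) * (1 / 2 + l) := by gcongr
    _ = _ := by field_simp

lemma mul_log_mono (x0 x : ℝ) (h0 : 0 < x0) (h : x0 ≤ x) (hl : 1 ≤ -Real.log x) :
    x0 * (-Real.log x0) ≤ x * (-Real.log x) := by
  have hx : 0 < x := by linarith
  have := Real.log_le_sub_one_of_pos (div_pos hx h0)
  rw [Real.log_div hx.ne' h0.ne'] at this
  have h2 : x0 * (Real.log x - Real.log x0) ≤ x - x0 := by
    calc _ ≤ x0 * (x / x0 - 1) := by gcongr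
      _ = _ := by field_simp
  nlinarith

set_option maxHeartbeats 1000000 in
theorem sin_pq_concave_in_q (p y : ℝ) (hp : 1 < p) (hy : 0 < y) (g : ℝ → ℝ)
    (hg : ∀ q : ℝ, 1 < q → g q ∈ Set.Ioo (0:ℝ) 1 ∧
      (∫ t in (0:ℝ)..g q, (1 - t ^ q) ^ (-(1 / p))) = y) :
    ConcaveOn ℝ (Set.Ioi (1:ℝ)) g := by
  have ha : 0 < 1 / p := by positivity
  have ha1 : 1 / p < 1 := by rw [div_lt_one (by linarith)]; exact hp
  set a := 1 / p
  have hS := fun x q hx hx1 hq => series_int a ha ha1 x q hx hx1 hq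
  set c : ℕ → ℝ := Ring.multichoose a with hcdef
  have hc0 : ∀ n, 0 ≤ c n := fun n => (mc_bounds a ha ha1 n).1
  have hc1 : ∀ n, c n ≤ 1 := fun n => (mc_bounds a ha ha1 n).2
  have hcz : c 0 = 1 := by simp [hcdef]
  set F : ℝ → ℝ → ℝ := fun x q => ∫ t in (0:ℝ)..x, (1 - t ^ q) ^ (-a) with hF
  have hS : ∀ x q : ℝ, 0 < x → x < 1 → 1 < q →
    HasSum (fun n : ℕ => c n * (x ^ (n * q + 1) / (n * q + 1))) (F x q) := hS
  have hg0 : ∀ q, 1 < q → 0 < g q := fun q hq => (hg q hq).1.1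
  have hg1 : ∀ q, 1 < q → g q < 1 := fun q hq => (hg q hq).1.2
  have hgF : ∀ q, 1 < q → F (g q) q = y := fun q hq => (hg q hq).2
  clear_value F c
  -- growth in x
  have grow : ∀ x x' q : ℝ, 0 < x → x ≤ x' → x' < 1 → 1 < q → F x q + (x' - x) ≤ F x' q := by
    intro x x' q hx hxx hx' hq
    have h1 := hS x q hx (by linarith) hq
    have h2 := hS x' q (by linarith) hx' hq
    have h3 : HasSum (fun n : ℕ => if n = 0 then x' - x else 0) (x' - x) := hasSum_ite_eq 0 _
    refine hasSum_le (fun n => ?_) (h1.add h3) h2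
    by_cases hn : n = 0
    · simp [hn, hcz]
    · simp only [hn, if_false, add_zero]
      have := hc0 n
      have : 0 ≤ (n : ℝ) * q + 1 := by positivity
      gcongr
  have cmp : ∀ x x' q : ℝ, 0 < x → 0 < x' → x < 1 → 1 < q → F x q ≤ F x' q → x ≤ x' := by
    intro x x' q hx hx' hx1 hq h
    by_contra hlt
    push Not at hlt
    have := grow x' x q hx' hlt.le hx1 hq
    linarith
  have geo : ∀ x : ℝ, 0 < x → x < 1 → HasSum (fun n : ℕ => if n = 0 then 0 else x ^ n)
      (x / (1 - x)) := by
    intro x hx hx1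
    have h1 := hasSum_geometric_of_lt_one hx.le hx1
    have h3 : HasSum (fun n : ℕ => if n = 0 then (1:ℝ) else 0) 1 := hasSum_ite_eq 0 _
    have h4 := h1.sub h3
    have e : (1 - x)⁻¹ - 1 = x / (1 - x) := by
      have : 1 - x ≠ 0 := by linarith
      field_simp; ring
    rw [e] at h4
    refine Eq.mp (congrArg (fun f => HasSum f _) (funext fun n => ?_)) h4
    by_cases hn : n = 0 <;> simp [hn]
  have Fup : ∀ x q : ℝ, 0 < x → x < 1 → 1 < q → F x q ≤ x / (1 - x) := by
    intro x q hx hx1 hq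
    have h2 := (hasSum_geometric_of_lt_one hx.le hx1).mul_left x
    rw [← div_eq_mul_inv] at h2
    refine hasSum_le (fun n => ?_) (hS x q hx hx1 hq) h2
    have hnq : 0 ≤ (n:ℝ) * q := by positivity
    have : x ^ (n * q + 1) ≤ x * x ^ n := by
      rw [Real.rpow_add_one hx.ne', mul_comm, ← Real.rpow_natCast]
      gcongr x * ?_
      exact Real.rpow_le_rpow_of_exponent_ge hx hx1.le
        (by nlinarith [Nat.cast_nonneg (α := ℝ) n])
    calc c n * (x ^ (n * q + 1) / (n * q + 1)) ≤ 1 * (x ^ (n * q + 1) / 1) := by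
          gcongr
          · exact hc1 n
          · linarith
      _ ≤ _ := by simpa using this
  have xleF : ∀ x q : ℝ, 0 < x → x < 1 → 1 < q → x ≤ F x q := by
    intro x q hx hx1 hq
    have h3 : HasSum (fun n : ℕ => if n = 0 then x else 0) x := hasSum_ite_eq 0 _
    refine hasSum_le (fun n => ?_) h3 (hS x q hx hx1 hq)
    by_cases hn : n = 0
    · simp [hn, hcz]
    · simp only [hn, if_false]
      exact mul_nonneg (hc0 n) (by positivity)
  refine LinearOrder.concaveOn_of_lt (convex_Ioi _) ?_
  intro q0 hq0 q1 hq1 hq α β hα hβ hαβ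
  simp only [Set.mem_Ioi] at hq0 hq1
  simp only [smul_eq_mul]
  have x0p := hg0 q0 hq0
  have x0l := hg1 q0 hq0
  have x1p := hg0 q1 hq1
  have x1l := hg1 q1 hq1
  have e0 := hgF q0 hq0
  have e1 := hgF q1 hq1
  have hQ : 1 < α * q0 + β * q1 := by
    have h1 : β * q0 ≤ β * q1 := by gcongr
    have h2 : α * q0 + β * q0 = q0 := by rw [← add_mul, hαβ, one_mul]
    linarith
  have gQ0 := hg0 _ hQ
  have eQ := hgF _ hQ
  generalize g (α * q0 + β * q1) = z at *
  generalize g q0 = x0 at *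
  generalize g q1 = x1 at *
  set l0 := -Real.log x0 with hl0
  have l0p : 0 < l0 := by linarith [Real.log_neg x0p x0l]
  -- difference bound
  have dF : F x0 q0 - F x0 q1 ≤
      (q1 - q0) / (q1 + 1) * (x0 * (1 + 2 * l0)) * (x0 / (1 - x0)) := by
    refine hasSum_le (fun n => ?_) ((hS x0 q0 x0p x0l hq0).sub (hS x0 q1 x0p x0l hq1))
      ((geo x0 x0p x0l).mul_left _)
    rw [← mul_sub]
    have h1 := term_diff n x0 q0 q1 x0p x0l hq0 hq
    have h2 : 0 ≤ (q1 - q0) / (q1 + 1) * (x0 * (1 + 2 * l0)) * (if n = 0 then 0 else x0 ^ n) := by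
      have : 0 < q1 - q0 := by linarith
      split_ifs <;> positivity
    calc _ ≤ c n * _ := mul_le_mul_of_nonneg_left h1 (hc0 n)
      _ ≤ 1 * _ := mul_le_mul_of_nonneg_right (hc1 n) h2
      _ = _ := one_mul _
  have mono : F x0 q1 ≤ F x0 q0 := by
    refine hasSum_le (fun n => ?_) (hS x0 q1 x0p x0l hq1) (hS x0 q0 x0p x0l hq0)
    have := hc0 n
    have h1 : x0 ^ (n * q1 + 1) ≤ x0 ^ (n * q0 + 1) :=
      Real.rpow_le_rpow_of_exponent_ge x0p x0l.le (by gcongr)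
    gcongr
  have x01 : x0 ≤ x1 := cmp x0 x1 q1 x0p x1p x0l hq1 (by linarith)
  have hgr := grow x0 x1 q1 x0p x01 x1l hq1
  have hd : 0 < q1 - q0 := by linarith
  obtain ⟨m, hm⟩ : ∃ m, m = (x1 - x0) / (q1 - q0) := ⟨_, rfl⟩
  have hm0 : 0 ≤ m := by rw [hm]; exact div_nonneg (by linarith) hd.le
  have hm1 : m * (q1 - q0) = x1 - x0 := by rw [hm]; field_simp
  have hmb : m * (q1 + 1) ≤ x0 * ((1 + 2 * l0) * (x0 / (1 - x0))) := by
    have h1 : x1 - x0 ≤ (q1 - q0) / (q1 + 1) * (x0 * (1 + 2 * l0)) * (x0 / (1 - x0)) := by linarith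
    have h2 : x1 - x0 ≤ (q1 - q0) / (q1 + 1) * (x0 * ((1 + 2 * l0) * (x0 / (1 - x0)))) := by
      linarith
    generalize x0 * ((1 + 2 * l0) * (x0 / (1 - x0))) = B at h2
    rw [hm, div_mul_eq_mul_div, div_le_iff₀ hd]
    rw [div_mul_eq_mul_div, le_div_iff₀ (by linarith)] at h2
    linarith
  have hXr : ∀ r ∈ Set.Icc q0 q1, x0 ≤ x0 + m * (r - q0) ∧ x0 + m * (r - q0) ≤ x1 := by
    intro r hr
    constructor
    · nlinarith [mul_nonneg hm0 (sub_nonneg.2 hr.1)]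
    · nlinarith [mul_nonneg hm0 (sub_nonneg.2 hr.2)]
  have hlr : ∀ r ∈ Set.Icc q0 q1, -Real.log (x0 + m * (r - q0)) ≤ l0 := by
    intro r hr
    linarith [Real.log_le_log x0p (hXr r hr).1]
  have hconv : ∀ n : ℕ, ConvexOn ℝ (Set.Icc q0 q1)
      (fun r : ℝ => (x0 + m * (r - q0)) ^ (n * r + 1) / (n * r + 1)) := by
    intro n
    refine term_convex n x0 m q0 q1 hq0 hm0
      (fun r hr => ⟨by linarith [(hXr r hr).1], by linarith [(hXr r hr).2]⟩) ?_
    intro r hr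
    have hX := hXr r hr
    have hL := hlr r hr
    rcases le_or_gt 0.26 x0 with hA | hA
    · left
      have : Real.exp (-1.36) ≤ 0.26 := by
        rw [Real.exp_neg, inv_le_comm₀ (Real.exp_pos _) (by norm_num)]
        have := Real.quadratic_le_exp_of_nonneg (x := 0.136) (by norm_num)
        have h4 : Real.exp 1.36 = Real.exp 0.136 ^ 10 := by
          rw [← Real.exp_nat_mul]; norm_num
        rw [h4]
        calc _ ≤ (1 + 0.136 + 0.136 ^ 2 / 2 : ℝ) ^ 10 := by norm_num
          _ ≤ _ := by gcongr
      have h2 : -1.36 ≤ Real.log x0 := by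
        rw [Real.le_log_iff_exp_le x0p]; linarith
      linarith
    · have hfr : x0 / (1 - x0) ≤ 0.352 := by
        rw [div_le_iff₀ (by linarith)]; linarith
      have hx1y : x1 ≤ 0.352 := by
        have := xleF x1 q1 x1p x1l hq1
        have := Fup x0 q0 x0p x0l hq0
        linarith
      have hXp : 0 < x0 + m * (r - q0) := by linarith
      have hl1 : 1 ≤ -Real.log (x0 + m * (r - q0)) := by
        have : Real.log (x0 + m * (r - q0)) ≤ -1 := by
          rw [Real.log_le_iff_le_exp hXp]
          have : (0.352:ℝ) ≤ Real.exp (-1) := by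
            rw [Real.exp_neg, le_inv_comm₀ (by norm_num) (Real.exp_pos _)]
            linarith [Real.exp_one_lt_d9]
          linarith
        linarith
      have hml := mul_log_mono x0 (x0 + m * (r - q0)) x0p hX.1 hl1
      have hmr : m * (r + 1) ≤ m * (q1 + 1) := by
        have := hr.2
        gcongr
      right
      rcases le_or_gt (1/7) x0 with hB | hB
      · left
        constructor
        · have : -2 ≤ Real.log x0 := by
            rw [Real.le_log_iff_exp_le x0p, Real.exp_neg]
            have h7 : (7:ℝ) ≤ Real.exp 2 := by
              have h4 : Real.exp 2 = Real.exp 1 ^ 2 := by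
                rw [← Real.exp_nat_mul]; norm_num
              rw [h4]; nlinarith [Real.exp_one_gt_d9]
            have : (Real.exp 2)⁻¹ ≤ 7⁻¹ := by gcongr
            linarith
          linarith
        · rw [div_mul_eq_mul_div, div_le_iff₀ hXp]
          have hl12 : 1.2 ≤ l0 := by
            have : Real.log x0 ≤ -1.2 := by
              rw [Real.log_le_iff_le_exp x0p]
              have h4 : Real.exp (-1.2) = Real.exp (-0.2) ^ 6 := by
                rw [← Real.exp_nat_mul]; norm_num
              have := Real.add_one_le_exp (-0.2)
              have : (0.8:ℝ) ^ 6 ≤ Real.exp (-0.2) ^ 6 := by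
                gcongr; linarith
              rw [h4]
              norm_num at this ⊢
              linarith
            linarith
          have : (1 + 2 * l0) * (x0 / (1 - x0)) ≤ l0 := by
            calc _ ≤ (1 + 2 * l0) * 0.352 := by gcongr
              _ ≤ _ := by linarith
          have : x0 * ((1 + 2 * l0) * (x0 / (1 - x0))) ≤ x0 * l0 := by gcongr
          linarith
      · right
        rw [mul_assoc, div_mul_eq_mul_div, ← mul_div_assoc, div_le_iff₀ hXp]
        have hfr : x0 / (1 - x0) ≤ 1 / 6 := by
          rw [div_le_iff₀ (by linarith)]; linarith
        have : (1 + 2 * l0) * (x0 / (1 - x0)) ≤ l0 / 2 := by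
          calc _ ≤ (1 + 2 * l0) * (1 / 6) := by gcongr
            _ ≤ _ := by linarith
        have : x0 * ((1 + 2 * l0) * (x0 / (1 - x0))) ≤ x0 * (l0 / 2) := by gcongr
        linarith
  -- conclude
  have hxm : α * x0 + β * x1 = x0 + m * (α * q0 + β * q1 - q0) := by
    have h1 : α = 1 - β := by linarith
    rw [h1]; linear_combination (-β) * hm1
  have hX0 : 0 < α * x0 + β * x1 := by positivity
  have hX1 : α * x0 + β * x1 < 1 := by
    have h1 : α * x0 ≤ α * x1 := by gcongr
    have h2 : α * x1 + β * x1 = x1 := by rw [← add_mul, hαβ, one_mul]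
    linarith
  refine cmp _ _ _ hX0 gQ0 hX1 hQ ?_
  rw [eQ]
  have e2 : y = α * F x0 q0 + β * F x1 q1 := by
    rw [e0, e1, ← add_mul, hαβ, one_mul]
  rw [e2]
  refine hasSum_le (fun n => ?_) (hS _ _ hX0 hX1 hQ)
    (((hS x0 q0 x0p x0l hq0).mul_left α).add ((hS x1 q1 x1p x1l hq1).mul_left β))
  have h := (hconv n).2 (Set.left_mem_Icc.2 hq.le) (Set.right_mem_Icc.2 hq.le) hα.le hβ.le hαβ
  simp only [smul_eq_mul, sub_self, mul_zero, add_zero] at h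
  rw [← hxm, hm1, add_sub_cancel] at h
  have := mul_le_mul_of_nonneg_left h (hc0 n)
  linarith
end

section
/- Let p, q > 1, α < 2, β < 1 and 0 ≤ s ≤ 1. Then ∫_0^1 [∫_0^{s·x} (1-t^q)^{-1/p} dt] · x^{-α} (1-x^q)^{-β} dx = (s/q) · B((2-α)/q, 1-β) · ∑_{k=0}^∞ [(1/p)_k ((2-α)/q)_k (1/q)_k / (((2-α)/q + 1 - β)_k (1/q + 1)_k · k!)] s^{qk}. (That is, ∫_0^1 arcsin_{p,q}(sx) x^{-α}(1-x^q)^{-β} dx = (s/q) B((2-α)/q, 1-β) ₃F₂(1/p, (2-α)/q, 1/q; (2-α)/q+1-β, 1/q+1; s^q).) -/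
open MeasureTheory
/-- Ascending Pochhammer symbol `(a)_k = a (a+1) ⋯ (a+k-1)`. -/
noncomputable def poch (a : ℝ) (k : ℕ) : ℝ := ∏ i ∈ Finset.range k, (a + i)

/-- Euler's beta function `B(a,b) = Γ(a)Γ(b)/Γ(a+b)`. -/
noncomputable def betaR (a b : ℝ) : ℝ := Real.Gamma a * Real.Gamma b / Real.Gamma (a + b)

open Set

lemma poch_succ' (a : ℝ) (k : ℕ) : poch a (k+1) = poch a k * (a + k) := by
  simp [poch, Finset.prod_range_succ]

lemma poch_pos' {a : ℝ} (ha : 0 < a) (k : ℕ) : 0 < poch a k :=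
  Finset.prod_pos fun i _ => by positivity

lemma poch_shift (a : ℝ) (k : ℕ) : poch a k * (a + k) = a * poch (a+1) k := by
  induction k with
  | zero => simp [poch]
  | succ n ih =>
    rw [poch_succ', ih, poch_succ']; push_cast; ring

lemma Gamma_poch {a : ℝ} (ha : 0 < a) (k : ℕ) :
    Real.Gamma (a + k) = poch a k * Real.Gamma a := by
  induction k with
  | zero => simp [poch]
  | succ n ih =>
    have : a + ((n+1 : ℕ) : ℝ) = (a + n) + 1 := by push_cast; ring
    rw [this, Real.Gamma_add_one (by positivity), ih, poch_succ']; ring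

lemma betaR_poch {a b : ℝ} (ha : 0 < a) (hb : 0 < b) (k : ℕ) :
    betaR (a + k) b = betaR a b * (poch a k / poch (a + b) k) := by
  have h1 := poch_pos' (add_pos ha hb) k
  have h2 := Real.Gamma_pos_of_pos (add_pos ha hb)
  have h3 : a + k + b = a + b + k := by ring
  unfold betaR
  rw [h3, Gamma_poch ha, Gamma_poch (add_pos ha hb)]
  field_simp

lemma choose_poch (a : ℝ) (k : ℕ) :
    Ring.choose (a + k - 1) k = poch a k / (k.factorial : ℝ) := by
  have h := Ring.factorial_nsmul_multichoose_eq_ascPochhammer a k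
  have h2 : Ring.choose (a + k - 1) k = Ring.multichoose a k := by
    rw [Ring.choose]; congr 1; ring
  have h3 : (ascPochhammer ℕ k).smeval a = poch a k := by
    induction k with
    | zero => simp [poch]
    | succ n ih =>
      rw [poch_succ', ← ih (Ring.factorial_nsmul_multichoose_eq_ascPochhammer a n) (by rw [Ring.choose]; congr 1; ring)]
      simp [ascPochhammer_succ_right, Polynomial.smeval_mul, Polynomial.smeval_add, Polynomial.smeval_natCast]
  rw [h2, eq_div_iff (by positivity), ← h3, ← h, nsmul_eq_mul, mul_comm]

lemma binom_hasSum (a : ℝ) {x : ℝ} (hx0 : 0 ≤ x) (hx : x < 1) :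
    HasSum (fun k : ℕ => poch a k / (k.factorial : ℝ) * x ^ k) ((1 - x) ^ (-a)) := by
  have h := (Real.one_div_one_sub_rpow_hasFPowerSeriesOnBall_zero a).hasSum (y := x)
    (by simpa [abs_of_nonneg hx0, enorm_eq_nnnorm, ← NNReal.coe_lt_coe] using hx)
  simp only [zero_add, FormalMultilinearSeries.ofScalars_apply_eq, choose_poch, smul_eq_mul] at h
  rw [Real.rpow_neg (by linarith), ← one_div]
  exact h

lemma coef_summable {a q : ℝ} (ha : 0 < a) (ha1 : a < 1) (hq : 1 < q) :
    Summable (fun k : ℕ => poch a k / (k.factorial : ℝ) / (q * k + 1)) := by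
  have hc : ∀ k, 0 < poch a k / (k.factorial : ℝ) := fun k =>
    div_pos (poch_pos' ha k) (by positivity)
  have h1 : Summable (fun k : ℕ => poch a k / (k.factorial : ℝ) / (k + 1)) := by
    apply summable_of_sum_range_le (c := 1 / (1 - a))
    · intro k; have := hc k; positivity
    · intro n
      have : ∑ i ∈ Finset.range n, poch a i / (i.factorial : ℝ) / (i + 1)
          = (1 - poch a n / (n.factorial : ℝ)) / (1 - a) := by
        have h1a : 1 - a ≠ 0 := by linarith
        induction n with
        | zero => simp [poch]
        | succ n ih =>
          rw [Finset.sum_range_succ, ih, poch_succ', Nat.factorial_succ]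
          push_cast
          field_simp
          ring
      rw [this]
      have := hc n
      apply div_le_div_of_nonneg_right _ (by linarith)
      linarith
  refine Summable.of_nonneg_of_le (fun k => ?_) (fun k => ?_) h1
  · have := hc k; positivity
  · have := hc k
    gcongr
    nlinarith [Nat.cast_nonneg (α := ℝ) k]

lemma beta_int {a b : ℝ} (ha : 0 < a) (hb : 0 < b) :
    IntegrableOn (fun x : ℝ => x ^ (a-1) * (1-x) ^ (b-1)) (Ioo 0 1) ∧
    ∫ x in Ioo (0:ℝ) 1, x ^ (a-1) * (1-x) ^ (b-1) = betaR a b := by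
  have hI := Complex.betaIntegral_convergent (u := a) (v := b) (by simpa) (by simpa)
  rw [intervalIntegrable_iff_integrableOn_Ioo_of_le (by simp)] at hI
  have hE : EqOn (fun x : ℝ => ((x:ℂ) ^ ((a:ℂ)-1) * (1-(x:ℂ)) ^ ((b:ℂ)-1)).re)
      (fun x : ℝ => x ^ (a-1) * (1-x) ^ (b-1)) (Ioo 0 1) := by
    intro x hx
    have h1 : (0:ℝ) ≤ x := hx.1.le
    have h2 : 0 ≤ 1 - x := by linarith [hx.2]
    simp only
    have e1 : (x:ℂ) ^ ((a:ℂ)-1) = ((x ^ (a-1) : ℝ) : ℂ) := by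
      rw [Complex.ofReal_cpow h1]; simp
    have e2 : (1-(x:ℂ)) ^ ((b:ℂ)-1) = (((1-x) ^ (b-1) : ℝ) : ℂ) := by
      rw [Complex.ofReal_cpow h2]; simp
    rw [e1, e2, ← Complex.ofReal_mul, Complex.ofReal_re]
  have hR : IntegrableOn (fun x : ℝ => ((x:ℂ) ^ ((a:ℂ)-1) * (1-(x:ℂ)) ^ ((b:ℂ)-1)).re) (Ioo 0 1) := hI.re
  refine ⟨hR.congr_fun hE measurableSet_Ioo, ?_⟩
  rw [← setIntegral_congr_fun measurableSet_Ioo hE]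
  have := ProbabilityTheory.beta_eq_betaIntegralReal a b ha hb
  rw [show betaR a b = ProbabilityTheory.beta a b from rfl, this, Complex.betaIntegral,
    intervalIntegral.integral_of_le (by norm_num), integral_Ioc_eq_integral_Ioo]
  exact integral_re hI

lemma beta_int_q {q c b : ℝ} (hq : 0 < q) (hc : 0 < c) (hb : 0 < b) :
    IntegrableOn (fun x : ℝ => x ^ (c-1) * (1-x^q) ^ (b-1)) (Ioo 0 1) ∧
    ∫ x in Ioo (0:ℝ) 1, x ^ (c-1) * (1-x^q) ^ (b-1) = betaR (c/q) b / q := by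
  obtain ⟨h1, h2⟩ := beta_int (a := c/q) (by positivity) hb
  set g : ℝ → ℝ := (Ioo (0:ℝ) 1).indicator (fun x : ℝ => x ^ (c/q-1) * (1-x) ^ (b-1)) with hg
  have hsub : Ioi (0:ℝ) ∩ Ioo 0 1 = Ioo 0 1 := by
    ext x; simp
  have hgi : IntegrableOn g (Ioi 0) := by
    rw [hg, integrableOn_indicator_iff measurableSet_Ioo, inter_comm, hsub]; exact h1
  have hgv : ∫ x in Ioi 0, g x = betaR (c/q) b := by
    rw [hg, setIntegral_indicator measurableSet_Ioo, hsub, h2]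
  have hE : EqOn (fun x : ℝ => x ^ (q-1) • g (x ^ q))
      ((Ioo (0:ℝ) 1).indicator (fun x : ℝ => x ^ (c-1) * (1-x^q) ^ (b-1))) (Ioi 0) := by
    intro x hx
    have hx : 0 < x := hx
    by_cases hx1 : x < 1
    · have hm : x ^ q ∈ Ioo (0:ℝ) 1 := ⟨by positivity, Real.rpow_lt_one hx.le hx1 hq⟩
      have hm' : x ∈ Ioo (0:ℝ) 1 := ⟨hx, hx1⟩
      simp only [hg, indicator_of_mem hm, indicator_of_mem hm', smul_eq_mul]
      rw [← Real.rpow_mul hx.le, ← mul_assoc, ← Real.rpow_add hx]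
      congr 2
      field_simp; ring
    · have hm : x ^ q ∉ Ioo (0:ℝ) 1 := fun h => absurd h.2
        (not_lt.2 (Real.one_le_rpow (not_lt.1 hx1) hq.le))
      have hm' : x ∉ Ioo (0:ℝ) 1 := fun h => hx1 h.2
      simp only [hg, indicator_of_notMem hm, indicator_of_notMem hm', smul_zero]
  constructor
  · have := ((integrableOn_Ioi_comp_rpow_iff' g hq.ne').2 hgi).congr_fun hE measurableSet_Ioi
    rwa [integrableOn_indicator_iff measurableSet_Ioo, inter_comm, hsub] at this
  · have := integral_comp_rpow_Ioi_of_pos (g := g) hq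
    rw [hgv] at this
    simp only [mul_smul] at this
    rw [integral_smul, setIntegral_congr_fun measurableSet_Ioi hE,
      setIntegral_indicator measurableSet_Ioo, hsub, smul_eq_mul] at this
    rw [← this]; field_simp

lemma inner_hasSum {a q y : ℝ} (ha : 0 < a) (hq : 1 < q) (hy : 0 ≤ y) (hy1 : y < 1) :
    HasSum (fun k : ℕ => poch a k / (k.factorial : ℝ) / (q * k + 1) * y ^ (q * k + 1))
      (∫ t in (0:ℝ)..y, (1 - t ^ q) ^ (-a)) := by
  have hc : ∀ k, 0 < poch a k / (k.factorial : ℝ) := fun k =>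
    div_pos (poch_pos' ha k) (by positivity)
  have hq0 : 0 < q := by linarith
  have hpw : ∀ t : ℝ, 0 ≤ t → t < 1 → HasSum (fun k : ℕ => poch a k / (k.factorial : ℝ) * t ^ (q * k))
      ((1 - t ^ q) ^ (-a)) := by
    intro t ht ht1
    have := binom_hasSum a (x := t ^ q) (by positivity) (Real.rpow_lt_one ht ht1 hq0)
    simpa [Real.rpow_mul ht] using this
  have key := intervalIntegral.hasSum_integral_of_dominated_convergence (μ := volume) (a := 0) (b := y)
    (F := fun (k : ℕ) (t : ℝ) => poch a k / (k.factorial : ℝ) * t ^ (q * k))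
    (f := fun t => (1 - t ^ q) ^ (-a))
    (fun k _ => poch a k / (k.factorial : ℝ) * y ^ (q * k)) ?_ ?_ ?_ ?_ ?_
  · refine (funext fun k => ?_ : (fun k : ℕ => poch a k / (k.factorial : ℝ) / (q * k + 1) * y ^ (q * k + 1))
      = fun k : ℕ => ∫ t in (0:ℝ)..y, poch a k / (k.factorial : ℝ) * t ^ (q * k)) ▸ key
    rw [intervalIntegral.integral_const_mul, integral_rpow (Or.inl (by
      have : 0 ≤ q * k := by positivity
      linarith)), Real.zero_rpow (by positivity)]
    ring
  · intro k
    exact Measurable.aestronglyMeasurable (by fun_prop)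
  · intro k
    refine Filter.Eventually.of_forall fun t ht => ?_
    rw [uIoc_of_le hy] at ht
    have := ht.1
    have h3 := hc k
    rw [Real.norm_of_nonneg (by positivity)]
    gcongr
    exact ht.2
  · exact Filter.Eventually.of_forall fun t _ => (hpw y hy hy1).summable
  · exact intervalIntegrable_const
  · refine Filter.Eventually.of_forall fun t ht => ?_
    rw [uIoc_of_le hy] at ht
    exact hpw t ht.1.le (lt_of_le_of_lt ht.2 hy1)

theorem arcsin_pq_integral (p q α β s : ℝ) (hp : 1 < p) (hq : 1 < q)
    (hα : α < 2) (hβ : β < 1) (hs : s ∈ Set.Icc (0:ℝ) 1) :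
    (∫ x in (0:ℝ)..1,
        (∫ t in (0:ℝ)..(s * x), (1 - t ^ q) ^ (-(1 / p))) * x ^ (-α) * (1 - x ^ q) ^ (-β)) =
      (s / q) * betaR ((2 - α) / q) (1 - β) *
        ∑' k : ℕ, poch (1 / p) k * poch ((2 - α) / q) k * poch (1 / q) k /
          (poch ((2 - α) / q + 1 - β) k * poch (1 / q + 1) k * (Nat.factorial k : ℝ)) *
            s ^ (q * (k : ℝ)) := by
  obtain ⟨hs0, hs1⟩ := hs
  have hq0 : 0 < q := by linarith
  have ha : 0 < 1 / p := by positivity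
  have ha1 : 1 / p < 1 := by rw [div_lt_one (by linarith)]; exact hp
  have hA : 0 < (2 - α) / q := div_pos (by linarith) hq0
  have hB : 0 < 1 - β := by linarith
  set a := 1 / p with hadef
  set e : ℕ → ℝ := fun k => poch a k / (k.factorial : ℝ) / (q * k + 1) with he
  have he0 : ∀ k, 0 < e k := fun k =>
    div_pos (div_pos (poch_pos' ha k) (by positivity)) (by positivity)
  have hes : Summable e := coef_summable ha ha1 hq
  set G : ℕ → ℝ → ℝ := fun k x => x ^ ((2 - α + q * k) - 1) * (1 - x ^ q) ^ ((1 - β) - 1) with hG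
  have hGi : ∀ k, IntegrableOn (G k) (Ioo 0 1) ∧
      ∫ x in Ioo (0:ℝ) 1, G k x = betaR ((2 - α + q * k) / q) (1 - β) / q := fun k =>
    beta_int_q hq0 (add_pos_of_pos_of_nonneg (by linarith) (by positivity)) hB
  set F : ℕ → ℝ → ℝ := fun k x => (e k * s ^ (q * k + 1)) * G k x with hF
  have hG0 : ∀ k, ∀ x ∈ Ioo (0:ℝ) 1, 0 ≤ G k x := by
    intro k x hx
    have h1 := hx.1
    have : x ^ q < 1 := Real.rpow_lt_one hx.1.le hx.2 hq0
    have : 0 ≤ 1 - x ^ q := by linarith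
    simp only [hG]; positivity
  have hGle : ∀ k, ∫ x in Ioo (0:ℝ) 1, G k x ≤ ∫ x in Ioo (0:ℝ) 1, G 0 x := by
    intro k
    refine setIntegral_mono_on (hGi k).1 (hGi 0).1 measurableSet_Ioo fun x hx => ?_
    have : x ^ q < 1 := Real.rpow_lt_one hx.1.le hx.2 hq0
    have : 0 ≤ 1 - x ^ q := by linarith
    have h0 : 0 ≤ q * k := by positivity
    simp only [hG]
    refine mul_le_mul_of_nonneg_right (Real.rpow_le_rpow_of_exponent_ge hx.1 hx.2.le ?_)
      (by positivity)
    simp; positivity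
  have hsk : ∀ k : ℕ, s ^ (q * k + 1) ≤ 1 := fun k =>
    Real.rpow_le_one hs0 hs1 (by positivity)
  have hF0 : ∀ k, ∀ x ∈ Ioo (0:ℝ) 1, 0 ≤ F k x := by
    intro k x hx
    have := hG0 k x hx
    have := he0 k
    simp only [hF]; positivity
  have key := hasSum_integral_of_summable_integral_norm (μ := volume.restrict (Ioo (0:ℝ) 1))
    (F := F) (fun k => (hGi k).1.const_mul _) (by
      refine Summable.of_nonneg_of_le (fun k => integral_nonneg fun _ => norm_nonneg _) (fun k => ?_)
        (hes.mul_right (∫ x in Ioo (0:ℝ) 1, G 0 x))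
      rw [setIntegral_congr_fun measurableSet_Ioo
        (fun x hx => Real.norm_of_nonneg (hF0 k x hx))]
      simp only [hF]
      rw [integral_const_mul]
      have h1 := he0 k
      have h2 := hsk k
      have h3 := setIntegral_nonneg (μ := volume) measurableSet_Ioo (hG0 k)
      refine mul_le_mul ?_ (hGle k) h3 h1.le
      nlinarith)
  have hL : ∫ x in Ioo (0:ℝ) 1, ∑' k, F k x = ∫ x in (0:ℝ)..1,
        (∫ t in (0:ℝ)..(s * x), (1 - t ^ q) ^ (-a)) * x ^ (-α) * (1 - x ^ q) ^ (-β) := by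
    rw [intervalIntegral.integral_of_le (by norm_num), integral_Ioc_eq_integral_Ioo]
    refine setIntegral_congr_fun measurableSet_Ioo fun x hx => ?_
    have hx0 := hx.1
    have hsx : s * x < 1 := by nlinarith [hx.2]
    have := ((inner_hasSum ha hq (y := s * x) (by positivity) hsx).mul_right (x ^ (-α))).mul_right
      ((1 - x ^ q) ^ (-β))
    rw [← this.tsum_eq]
    congr 1
    ext k
    simp only [hF, hG]
    rw [Real.mul_rpow hs0 hx0.le, show 2 - α + q * k - 1 = (q * k + 1) + (-α) by ring,
      Real.rpow_add hx0, show 1 - β - 1 = -β by ring]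
    ring
  rw [← hL, ← key.tsum_eq, ← tsum_mul_left]
  congr 1
  ext k
  simp only [hF]
  rw [integral_const_mul, (hGi k).2, show (2 - α + q * k) / q = (2 - α) / q + k by field_simp,
    betaR_poch hA hB, Real.rpow_add_one' hs0 (by positivity),
    show (2 - α) / q + 1 - β = (2 - α) / q + (1 - β) by ring]
  have hsh : poch (1 / q) k = poch (1 / q + 1) k / (q * k + 1) := by
    have := poch_shift (1 / q) k
    field_simp at this ⊢
    linarith
  rw [hsh]
  have h1 := poch_pos' (add_pos hA hB) k
  have h2 := poch_pos' (a := 1 / q + 1) (by positivity) k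
  simp only [he]
  generalize poch ((2 - α) / q + (1 - β)) k = P1 at *
  generalize poch (1 / q + 1) k = P2 at *
  generalize poch ((2 - α) / q) k = P3 at *
  generalize betaR ((2 - α) / q) (1 - β) = B at *
  field_simp
end

section
/- Fix q > 1 and y > 0, and let g : ℝ → ℝ satisfy g(p) ∈ (0,∞) and ∫_0^{g(p)} (1+t^q)^{-1/p} dt = y for every p > 1. Then p ↦ log g(p) is convex on (1,∞) if and only if for every p > 1, writing x = g(p), one has (((q−p)x^q − p)/(p x (1+x^q)^{1−1/p})) · (∫_0^x λ₁(p,t) dt)² + 2 log(1+x^q) · ∫_0^x λ₁(p,t) dt + ∫_0^x λ₂(p,t) dt ≥ 0, where λ₁(p,t) = log(1+t^q)/(1+t^q)^{1/p} and λ₂(p,t) = (2p − log(1+t^q)) log(1+t^q)/(1+t^q)^{1/p}. -/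
open MeasureTheory

noncomputable def LL (q t : ℝ) : ℝ := Real.log (1 + |t| ^ q)

noncomputable def KK (q : ℝ) (k : ℕ) (r x : ℝ) : ℝ :=
  ∫ t in (0:ℝ)..x, LL q t ^ k * Real.exp (r * LL q t)

lemma LL_cont (q : ℝ) (hq : 1 < q) : Continuous (LL q) := by
  unfold LL
  refine Continuous.log ?_ ?_
  · exact continuous_const.add (continuous_abs.rpow_const (fun x => Or.inr (by linarith)))
  · intro x
    have := Real.rpow_nonneg (abs_nonneg x) q
    positivity

lemma KK_cont (q : ℝ) (hq : 1 < q) (k : ℕ) : Continuous (fun z : ℝ × ℝ => KK q k z.1 z.2) := by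
  have hL := LL_cont q hq
  unfold KK
  refine intervalIntegral.continuous_parametric_intervalIntegral_of_continuous (f := fun (z : ℝ × ℝ) t => LL q t ^ k * Real.exp (z.1 * LL q t)) ?_ continuous_snd
  simp only [Function.uncurry_def]
  fun_prop

lemma KK_dx (q : ℝ) (hq : 1 < q) (k : ℕ) (r x : ℝ) :
    HasDerivAt (fun x => KK q k r x) (LL q x ^ k * Real.exp (r * LL q x)) x := by
  have hL := LL_cont q hq
  unfold KK
  have hc : Continuous (fun t => LL q t ^ k * Real.exp (r * LL q t)) := by fun_prop
  exact (hc.integral_hasStrictDerivAt 0 x).hasDerivAt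

lemma KK_dr (q : ℝ) (hq : 1 < q) (k : ℕ) (r x : ℝ) :
    HasDerivAt (fun r => KK q k r x) (KK q (k+1) r x) r := by
  have hL := LL_cont q hq
  unfold KK
  refine (intervalIntegral.hasDerivAt_integral_of_dominated_loc_of_deriv_le (s := Metric.ball r 1)
    (F := fun r t => LL q t ^ k * Real.exp (r * LL q t))
    (F' := fun r t => LL q t ^ (k+1) * Real.exp (r * LL q t))
    (bound := fun t => |LL q t| ^ (k+1) * Real.exp ((|r| + 1) * |LL q t|))
    (Metric.ball_mem_nhds _ one_pos) ?_ ?_ ?_ ?_ ?_ ?_).2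
  · refine Filter.Eventually.of_forall fun s => Continuous.aestronglyMeasurable (by fun_prop)
  · exact Continuous.intervalIntegrable (by fun_prop) _ _
  · exact Continuous.aestronglyMeasurable (by fun_prop)
  · refine Filter.Eventually.of_forall fun t _ s hs => ?_
    rw [norm_mul, norm_pow, Real.norm_eq_abs, Real.norm_eq_abs, Real.abs_exp]
    refine mul_le_mul_of_nonneg_left (Real.exp_le_exp.mpr ?_) (by positivity)
    have h1 : |s| ≤ |r| + 1 := by
      rw [Metric.mem_ball, Real.dist_eq] at hs
      have := abs_sub_abs_le_abs_sub s r
      linarith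
    calc s * LL q t ≤ |s * LL q t| := le_abs_self _
      _ = |s| * |LL q t| := abs_mul _ _
      _ ≤ _ := by gcongr
  · exact Continuous.intervalIntegrable (by fun_prop) _ _
  · refine Filter.Eventually.of_forall fun t _ s hs => ?_
    have := (((hasDerivAt_id s).mul_const (LL q t)).exp).const_mul (LL q t ^ k)
    refine this.congr_deriv ?_
    simp only [id]; ring

lemma KK_strict (q : ℝ) (hq : 1 < q) (k : ℕ) (u : ℝ × ℝ) :
    HasStrictFDerivAt (fun z : ℝ × ℝ => KK q k z.1 z.2)
      ((ContinuousLinearMap.toSpanSingleton ℝ (KK q (k+1) u.1 u.2)).coprod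
        (ContinuousLinearMap.toSpanSingleton ℝ (LL q u.2 ^ k * Real.exp (u.1 * LL q u.2)))) u := by
  have hL := LL_cont q hq
  have hK := KK_cont q hq (k+1)
  refine hasStrictFDerivAt_uncurry_coprod (𝕜 := ℝ) (u := u) (f := KK q k)
    (f₁ := fun r x => ContinuousLinearMap.toSpanSingleton ℝ (KK q (k+1) r x))
    (f₂ := fun r x => ContinuousLinearMap.toSpanSingleton ℝ (LL q x ^ k * Real.exp (r * LL q x)))
    (Filter.Eventually.of_forall fun v => (KK_dr q hq k v.1 v.2).hasFDerivAt)
    (Filter.Eventually.of_forall fun v => (KK_dx q hq k v.1 v.2).hasFDerivAt) ?_ ?_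
  · refine Continuous.continuousAt ?_
    have := (ContinuousLinearMap.toSpanSingletonCLE (𝕜 := ℝ) (E := ℝ)).continuous.comp hK
    exact this
  · refine Continuous.continuousAt ?_
    have h2 : Continuous (fun z : ℝ × ℝ => LL q z.2 ^ k * Real.exp (z.1 * LL q z.2)) := by fun_prop
    exact (ContinuousLinearMap.toSpanSingletonCLE (𝕜 := ℝ) (E := ℝ)).continuous.comp h2

lemma KK_inj (q : ℝ) (hq : 1 < q) (r : ℝ) : Function.Injective (fun x => KK q 0 r x) := by
  refine (strictMono_of_deriv_pos fun x => ?_).injective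
  rw [(KK_dx q hq 0 r x).deriv]
  positivity

lemma hi_lem (p : ℝ) (hp : p ≠ 0) : HasDerivAt (fun p : ℝ => 1/p) (-(1/p^2)) p := by
  simpa only [one_div] using hasDerivAt_inv hp

lemma hr_lem (p : ℝ) (hp : p ≠ 0) : HasDerivAt (fun p : ℝ => -(1/p)) (1/p^2) p := by
  simpa only [neg_neg] using (hi_lem p hp).fun_neg

/-- composite derivative -/
lemma KK_comp (q : ℝ) (hq : 1 < q) (k : ℕ) (g : ℝ → ℝ) (p g' : ℝ) (hp : 1 < p)
    (hg : HasDerivAt g g' p) :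
    HasDerivAt (fun p => KK q k (-(1/p)) (g p))
      (1 / p^2 * KK q (k+1) (-(1/p)) (g p) +
        g' * (LL q (g p) ^ k * Real.exp (-(1/p) * LL q (g p)))) p := by
  have hr : HasDerivAt (fun p : ℝ => -(1/p)) (1/p^2) p := by
    exact hr_lem p (by positivity)
  have := (KK_strict q hq k (-(1/p), g p)).hasFDerivAt.comp_hasDerivAt p (hr.prodMk hg)
  refine this.congr_deriv ?_
  simp

lemma g_diff (q y : ℝ) (hq : 1 < q) (g : ℝ → ℝ)
    (hg : ∀ p : ℝ, 1 < p → KK q 0 (-(1/p)) (g p) = y) (p : ℝ) (hp : 1 < p) :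
    HasDerivAt g (- (1/p^2) * KK q 1 (-(1/p)) (g p) * Real.exp (1/p * LL q (g p))) p := by
  have hr : HasDerivAt (fun p : ℝ => -(1/p)) (1/p^2) p := by
    exact hr_lem p (by positivity)
  have hs := KK_strict q hq 0 (-(1/p), g p)
  have hinv : ((((ContinuousLinearMap.toSpanSingleton ℝ (KK q (0+1) (-(1/p)) (g p))).coprod
        (ContinuousLinearMap.toSpanSingleton ℝ (LL q (g p) ^ 0 * Real.exp (-(1/p) * LL q (g p))))))
        ∘L .inr ℝ ℝ ℝ).IsInvertible := by
    rw [ContinuousLinearMap.coprod_comp_inr]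
    have hne : Real.exp (-(1/p) * LL q (g p)) ≠ 0 := (Real.exp_pos _).ne'
    refine ⟨ContinuousLinearEquiv.unitsEquivAut ℝ (Units.mk0 _ hne), ?_⟩
    ext
    simp
  have hev := hs.eventually_apply_implicitFunctionOfProdDomain hinv
  have hd := (hs.hasStrictFDerivAt_implicitFunctionOfProdDomain hinv).hasFDerivAt.differentiableAt
  set ψ := hs.implicitFunctionOfProdDomain hinv
  have heq : g =ᶠ[nhds p] (fun p => ψ (-(1/p))) := by
    have h1 := hr.continuousAt.eventually hev
    filter_upwards [h1, lt_mem_nhds hp] with s hs1 hs2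
    apply KK_inj q hq (-(1/s))
    simp only at hs1 ⊢
    rw [hs1, hg s hs2, hg p hp]
  have hgd : DifferentiableAt ℝ g p := by
    refine DifferentiableAt.congr_of_eventuallyEq ?_ heq
    exact DifferentiableAt.comp (g := ψ) p hd hr.differentiableAt
  have h3 := KK_comp q hq 0 g p _ hp hgd.hasDerivAt
  have h4 : HasDerivAt (fun p => KK q 0 (-(1/p)) (g p)) 0 p := by
    refine (hasDerivAt_const p y).congr_of_eventuallyEq ?_
    filter_upwards [lt_mem_nhds hp] with s hs using hg s hs
  have h5 := h3.unique h4
  have h6 : Real.exp (-(1/p) * LL q (g p)) * Real.exp (1/p * LL q (g p)) = 1 := by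
    rw [← Real.exp_add]; simp
  refine hgd.hasDerivAt.congr_deriv ?_
  simp only [pow_zero, one_mul, zero_add] at h5
  linear_combination (Real.exp (1/p * LL q (g p))) * h5 - (deriv g p) * h6

lemma LL_deriv (q x : ℝ) (hx : 0 < x) :
    HasDerivAt (LL q) (q * x^(q-1) / (1 + x^q)) x := by
  have h1 : HasDerivAt (fun t : ℝ => Real.log (1 + t^q)) (q * x^(q-1) / (1 + x^q)) x :=
    ((Real.hasDerivAt_rpow_const (Or.inl hx.ne')).const_add 1).log (by positivity)
  refine h1.congr_of_eventuallyEq ?_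
  filter_upwards [lt_mem_nhds hx] with s hs
  simp [LL, abs_of_pos hs]

lemma u_diff2 (q y : ℝ) (hq : 1 < q) (g : ℝ → ℝ) (hpos : ∀ p : ℝ, 1 < p → 0 < g p)
    (hg : ∀ p : ℝ, 1 < p → KK q 0 (-(1/p)) (g p) = y) (p : ℝ) (hp : 1 < p) :
    HasDerivAt (fun p => - (1/p^2) * KK q 1 (-(1/p)) (g p) * Real.exp (1/p * LL q (g p)) / g p)
      (Real.exp (1/p * LL q (g p)) / (p^4 * g p) *
        (((q - p) * g p ^ q - p) / (p * g p * (1 + g p ^ q) ^ (1 - 1 / p)) *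
          (KK q 1 (-(1/p)) (g p))^2 + 2 * LL q (g p) * KK q 1 (-(1/p)) (g p) +
          (2 * p * KK q 1 (-(1/p)) (g p) - KK q 2 (-(1/p)) (g p)))) p := by
  have hx := hpos p hp
  have hp0 : p ≠ 0 := by positivity
  have hgd := g_diff q y hq g hg p hp
  have hK := KK_comp q hq 1 g p _ hp hgd
  have hi : HasDerivAt (fun p : ℝ => 1/p) (-(1/p^2)) p := by
    exact hi_lem p hp0
  have hi2 : HasDerivAt (fun p : ℝ => -(1/p^2)) (2/p^3) p := by
    have h := ((hasDerivAt_pow 2 p).fun_inv (by positivity)).fun_neg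
    simp only [← one_div] at h
    refine h.congr_deriv ?_
    field_simp
    norm_num [mul_comm]
  have hL := (LL_deriv q (g p) hx).comp p hgd
  have hE := (hi.mul hL).exp
  have H := ((hi2.mul hK).mul hE).div hgd hx.ne'
  refine H.congr_deriv ?_
  have hX : 0 < 1 + g p ^ q := by positivity
  have h6 : Real.exp (-(1/p) * LL q (g p)) = (Real.exp (1/p * LL q (g p)))⁻¹ := by
    rw [← Real.exp_neg]; simp
  have h7 : (1 + g p ^ q) ^ (1 - 1/p) = (1 + g p ^ q) / Real.exp (1/p * LL q (g p)) := by
    rw [Real.rpow_sub hX, Real.rpow_one, Real.rpow_def_of_pos hX (1/p)]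
    simp only [LL, abs_of_pos hx, mul_comm]
  have h8 : g p ^ (q-1) = g p ^ q / g p := Real.rpow_sub_one hx.ne' q
  simp only [Function.comp, Pi.mul_apply]
  rw [h6, h7, h8]
  have hS := Real.exp_pos (1/p * LL q (g p))
  generalize Real.exp (1/p * LL q (g p)) = S at *
  generalize KK q 1 (-(1/p)) (g p) = A at *
  generalize KK q (1+1) (-(1/p)) (g p) = B at *
  generalize g p ^ q = Z at *
  generalize LL q (g p) = l at *
  generalize g p = x at *
  have := hS.ne'
  have := hx.ne'
  have := hX.ne'
  field_simp
  ring

theorem sinh_pq_log_convexity_criterion (q y : ℝ) (hq : 1 < q) (hy : 0 < y) (g : ℝ → ℝ)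
    (hg : ∀ p : ℝ, 1 < p → g p ∈ Set.Ioi (0:ℝ) ∧
      (∫ t in (0:ℝ)..g p, (1 + t ^ q) ^ (-(1 / p))) = y) :
    ConvexOn ℝ (Set.Ioi (1:ℝ)) (fun p => Real.log (g p)) ↔
      ∀ p : ℝ, 1 < p →
        ((q - p) * g p ^ q - p) / (p * g p * (1 + g p ^ q) ^ (1 - 1 / p)) *
            (∫ t in (0:ℝ)..g p, Real.log (1 + t ^ q) / (1 + t ^ q) ^ (1 / p)) ^ 2 +
          2 * Real.log (1 + g p ^ q) *
            (∫ t in (0:ℝ)..g p, Real.log (1 + t ^ q) / (1 + t ^ q) ^ (1 / p)) +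
          (∫ t in (0:ℝ)..g p,
            (2 * p - Real.log (1 + t ^ q)) * Real.log (1 + t ^ q) / (1 + t ^ q) ^ (1 / p))
          ≥ 0 := by
  have hpos : ∀ p : ℝ, 1 < p → 0 < g p := fun p hp => (hg p hp).1
  have hLc := LL_cont q hq
  have hexp : ∀ (p t : ℝ), 0 ≤ t → Real.exp (-(1/p) * LL q t) = (1 + t ^ q) ^ (-(1/p)) := by
    intro p t ht
    have : 0 < 1 + t ^ q := by positivity
    rw [Real.rpow_def_of_pos this, LL, abs_of_nonneg ht, mul_comm]
  have hdiv : ∀ (p t a : ℝ), 0 ≤ t → a / (1 + t ^ q) ^ (1/p) = a * Real.exp (-(1/p) * LL q t) := by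
    intro p t a ht
    have : 0 < 1 + t ^ q := by positivity
    rw [hexp p t ht, Real.rpow_neg this.le, div_eq_mul_inv]
  have hLL : ∀ t : ℝ, 0 ≤ t → Real.log (1 + t ^ q) = LL q t := by
    intro t ht
    rw [LL, abs_of_nonneg ht]
  have hg0 : ∀ p : ℝ, 1 < p → KK q 0 (-(1/p)) (g p) = y := by
    intro p hp
    rw [← (hg p hp).2, KK]
    refine intervalIntegral.integral_congr fun t ht => ?_
    rw [Set.uIcc_of_le (hpos p hp).le] at ht
    simp only [pow_zero, one_mul]
    exact hexp p t ht.1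
  have hI1 : ∀ p : ℝ, 1 < p → (∫ t in (0:ℝ)..g p, Real.log (1 + t ^ q) / (1 + t ^ q) ^ (1 / p))
      = KK q 1 (-(1/p)) (g p) := by
    intro p hp
    rw [KK]
    refine intervalIntegral.integral_congr fun t ht => ?_
    rw [Set.uIcc_of_le (hpos p hp).le] at ht
    simp only [pow_one]
    rw [hdiv p t _ ht.1, hLL t ht.1]
  have hI2 : ∀ p : ℝ, 1 < p → (∫ t in (0:ℝ)..g p,
            (2 * p - Real.log (1 + t ^ q)) * Real.log (1 + t ^ q) / (1 + t ^ q) ^ (1 / p))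
      = 2 * p * KK q 1 (-(1/p)) (g p) - KK q 2 (-(1/p)) (g p) := by
    intro p hp
    rw [KK, KK, ← intervalIntegral.integral_const_mul, ← intervalIntegral.integral_sub]
    · refine intervalIntegral.integral_congr fun t ht => ?_
      rw [Set.uIcc_of_le (hpos p hp).le] at ht
      beta_reduce
      rw [hdiv p t _ ht.1, hLL t ht.1]
      ring
    · exact Continuous.intervalIntegrable (by fun_prop) _ _
    · exact Continuous.intervalIntegrable (by fun_prop) _ _
  have hd1 : ∀ p : ℝ, 1 < p → HasDerivAt (fun p => Real.log (g p)) _ p := fun p hp =>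
    (g_diff q y hq g hg0 p hp).log (hpos p hp).ne'
  have hd2 : ∀ p : ℝ, 1 < p → HasDerivAt (deriv (fun p => Real.log (g p))) _ p := fun p hp => by
    refine (u_diff2 q y hq g hpos hg0 p hp).congr_of_eventuallyEq ?_
    filter_upwards [lt_mem_nhds hp] with s hs using (hd1 s hs).deriv
  have hfac : ∀ p : ℝ, 1 < p → 0 < Real.exp (1/p * LL q (g p)) / (p^4 * g p) := by
    intro p hp
    have := hpos p hp
    positivity
  constructor
  · intro hc p hp
    rw [hI1 p hp, hI2 p hp, hLL _ (hpos p hp).le]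
    have hm := hc.monotoneOn_deriv (fun x hx => (hd1 x hx).differentiableAt)
    have h0 : 0 ≤ deriv (deriv (fun p => Real.log (g p))) p := by
      have h1 := hm.derivWithin_nonneg (x := p)
      rwa [derivWithin_of_isOpen isOpen_Ioi hp] at h1
    rw [(hd2 p hp).deriv] at h0
    exact nonneg_of_mul_nonneg_right h0 (hfac p hp)
  · intro h
    refine convexOn_of_deriv2_nonneg' (convex_Ioi 1)
      (fun p hp => (hd1 p hp).differentiableAt.differentiableWithinAt)
      (fun p hp => (hd2 p hp).differentiableAt.differentiableWithinAt) ?_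
    intro p hp
    have h1 := h p hp
    rw [hI1 p hp, hI2 p hp, hLL _ (hpos p hp).le] at h1
    change 0 ≤ deriv (deriv (fun p => Real.log (g p))) p
    rw [(hd2 p hp).deriv]
    exact mul_nonneg (hfac p hp).le h1
end
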